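/- Suppose the horizon satisfies N ≥ n and assumptions (A1)–(A5) hold. Then there exist V_max, J_eq^max > 0 and c_V ∈ (0,1) such that: for every x_t ∈ ℝⁿ at which the tracking MPC problem is feasible with V(x_t) ≤ V_max and J*_{eq,lin}(x_t) ≤ J_eq^max, if (x̄*, ū*, xˢ*, uˢ*, yˢ*) is an optimal solution of the tracking MPC problem at x_t and x_{t+n} denotes the state obtained by applying ū*₀, …, ū*_{n−1} to the nonlinear dynamics x_{k+1} = f(x_k, u_k) starting from x_t, and moreover J*_{eq,lin}(x_{t+n}) ≤ J_eq^max, then the tracking MPC problem is feasible at x_{t+n} and V(x_{t+n}) ≤ c_V · V(x_t). -/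

import Mathlib

open Matrix

noncomputable section

def en {k : ℕ} (x : Fin k → ℝ) : ℝ := Real.sqrt (∑ i, x i ^ 2)

def qn {k : ℕ} (P : Matrix (Fin k) (Fin k) ℝ) (x : Fin k → ℝ) : ℝ :=
  x ⬝ᵥ P.mulVec x

def jac {n q : ℕ} (g : (Fin n → ℝ) → Fin q → ℝ) (xt : Fin n → ℝ) :
    Matrix (Fin q) (Fin n) ℝ :=
  LinearMap.toMatrix' (fderiv ℝ g xt).toLinearMap

def fdyn {n m : ℕ} (f0 : (Fin n → ℝ) → Fin n → ℝ) (B : Matrix (Fin n) (Fin m) ℝ)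
    (x : Fin n → ℝ) (u : Fin m → ℝ) : Fin n → ℝ :=
  f0 x + B.mulVec u

def hout {n p m : ℕ} (h0 : (Fin n → ℝ) → Fin p → ℝ) (D : Matrix (Fin p) (Fin m) ℝ)
    (x : Fin n → ℝ) (u : Fin m → ℝ) : Fin p → ℝ :=
  h0 x + D.mulVec u

def flin {n m : ℕ} (f0 : (Fin n → ℝ) → Fin n → ℝ) (B : Matrix (Fin n) (Fin m) ℝ)
    (xt x : Fin n → ℝ) (u : Fin m → ℝ) : Fin n → ℝ :=
  (jac f0 xt).mulVec x + B.mulVec u + (f0 xt - (jac f0 xt).mulVec xt)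

def hlin {n p m : ℕ} (h0 : (Fin n → ℝ) → Fin p → ℝ) (D : Matrix (Fin p) (Fin m) ℝ)
    (xt x : Fin n → ℝ) (u : Fin m → ℝ) : Fin p → ℝ :=
  (jac h0 xt).mulVec x + D.mulVec u + (h0 xt - (jac h0 xt).mulVec xt)

def Zlin {n m : ℕ} (f0 : (Fin n → ℝ) → Fin n → ℝ) (B : Matrix (Fin n) (Fin m) ℝ)
    (Us : Set (Fin m → ℝ)) (xt : Fin n → ℝ) : Set ((Fin n → ℝ) × (Fin m → ℝ)) :=
  {z | z.2 ∈ Us ∧ z.1 = flin f0 B xt z.1 z.2}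

def Zs {n m : ℕ} (f0 : (Fin n → ℝ) → Fin n → ℝ) (B : Matrix (Fin n) (Fin m) ℝ)
    (Us : Set (Fin m → ℝ)) : Set ((Fin n → ℝ) × (Fin m → ℝ)) :=
  {z | z.2 ∈ Us ∧ z.1 = fdyn f0 B z.1 z.2}

def A2holds {n m p : ℕ} (f0 : (Fin n → ℝ) → Fin n → ℝ) (h0 : (Fin n → ℝ) → Fin p → ℝ)
    (B : Matrix (Fin n) (Fin m) ℝ) (D : Matrix (Fin p) (Fin m) ℝ) (σs : ℝ) : Prop :=
  ∀ (xt v : Fin n → ℝ) (w : Fin m → ℝ),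
    σs * Real.sqrt (en v ^ 2 + en w ^ 2) ≤
      Real.sqrt (en ((jac f0 xt).mulVec v - v + B.mulVec w) ^ 2 +
        en ((jac h0 xt).mulVec v + D.mulVec w) ^ 2)

def A3holds {n m : ℕ} (f0 : (Fin n → ℝ) → Fin n → ℝ) (B : Matrix (Fin n) (Fin m) ℝ)
    (μ : ℝ) : Prop :=
  ∀ (xt w : Fin n → ℝ),
    μ * en w ≤ Real.sqrt (∑ k ∈ Finset.range n, en ((jac f0 xt ^ k * B)ᵀ.mulVec w) ^ 2)

def A4holds {n : ℕ} (f0 : (Fin n → ℝ) → Fin n → ℝ) (σl : ℝ) : Prop :=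
  ∀ xt v : Fin n → ℝ, σl * en v ≤ en (v - (jac f0 xt).mulVec v)
def Jeqlin {n m p : ℕ} (f0 : (Fin n → ℝ) → Fin n → ℝ) (h0 : (Fin n → ℝ) → Fin p → ℝ)
    (B : Matrix (Fin n) (Fin m) ℝ) (D : Matrix (Fin p) (Fin m) ℝ)
    (Us : Set (Fin m → ℝ)) (S : Matrix (Fin p) (Fin p) ℝ) (yr : Fin p → ℝ)
    (xt : Fin n → ℝ) : ℝ :=
  sInf {c : ℝ | ∃ z ∈ Zlin f0 B Us xt, c = qn S (hlin h0 D xt z.1 z.2 - yr)}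

def MPCfeas {n m p : ℕ} (f0 : (Fin n → ℝ) → Fin n → ℝ) (h0 : (Fin n → ℝ) → Fin p → ℝ)
    (B : Matrix (Fin n) (Fin m) ℝ) (D : Matrix (Fin p) (Fin m) ℝ)
    (U Us : Set (Fin m → ℝ)) (N : ℕ) (xt : Fin n → ℝ)
    (xb : ℕ → Fin n → ℝ) (ub : ℕ → Fin m → ℝ)
    (xs : Fin n → ℝ) (us : Fin m → ℝ) (ys : Fin p → ℝ) : Prop :=
  (∀ k < N, xb (k + 1) = flin f0 B xt (xb k) (ub k)) ∧
  xb 0 = xt ∧ xb N = xs ∧ (∀ k < N, ub k ∈ U) ∧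
  (xs, us) ∈ Zlin f0 B Us xt ∧ ys = hlin h0 D xt xs us

def MPCcost {n m p : ℕ} (Q : Matrix (Fin n) (Fin n) ℝ) (R : Matrix (Fin m) (Fin m) ℝ)
    (S : Matrix (Fin p) (Fin p) ℝ) (yr : Fin p → ℝ) (N : ℕ)
    (xb : ℕ → Fin n → ℝ) (ub : ℕ → Fin m → ℝ)
    (xs : Fin n → ℝ) (us : Fin m → ℝ) (ys : Fin p → ℝ) : ℝ :=
  (∑ k ∈ Finset.range N, (qn Q (xb k - xs) + qn R (ub k - us))) + qn S (ys - yr)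

def Jstar {n m p : ℕ} (f0 : (Fin n → ℝ) → Fin n → ℝ) (h0 : (Fin n → ℝ) → Fin p → ℝ)
    (B : Matrix (Fin n) (Fin m) ℝ) (D : Matrix (Fin p) (Fin m) ℝ)
    (U Us : Set (Fin m → ℝ)) (Q : Matrix (Fin n) (Fin n) ℝ) (R : Matrix (Fin m) (Fin m) ℝ)
    (S : Matrix (Fin p) (Fin p) ℝ) (yr : Fin p → ℝ) (N : ℕ) (xt : Fin n → ℝ) : ℝ :=
  sInf {c : ℝ | ∃ xb ub xs us ys, MPCfeas f0 h0 B D U Us N xt xb ub xs us ys ∧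
    c = MPCcost Q R S yr N xb ub xs us ys}

def Vfun {n m p : ℕ} (f0 : (Fin n → ℝ) → Fin n → ℝ) (h0 : (Fin n → ℝ) → Fin p → ℝ)
    (B : Matrix (Fin n) (Fin m) ℝ) (D : Matrix (Fin p) (Fin m) ℝ)
    (U Us : Set (Fin m → ℝ)) (Q : Matrix (Fin n) (Fin n) ℝ) (R : Matrix (Fin m) (Fin m) ℝ)
    (S : Matrix (Fin p) (Fin p) ℝ) (yr : Fin p → ℝ) (N : ℕ) (xt : Fin n → ℝ) : ℝ :=
  Jstar f0 h0 B D U Us Q R S yr N xt - Jeqlin f0 h0 B D Us S yr xt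

def MPCfeasible {n m p : ℕ} (f0 : (Fin n → ℝ) → Fin n → ℝ) (h0 : (Fin n → ℝ) → Fin p → ℝ)
    (B : Matrix (Fin n) (Fin m) ℝ) (D : Matrix (Fin p) (Fin m) ℝ)
    (U Us : Set (Fin m → ℝ)) (N : ℕ) (xt : Fin n → ℝ) : Prop :=
  ∃ xb ub xs us ys, MPCfeas f0 h0 B D U Us N xt xb ub xs us ys

def MPCopt {n m p : ℕ} (f0 : (Fin n → ℝ) → Fin n → ℝ) (h0 : (Fin n → ℝ) → Fin p → ℝ)
    (B : Matrix (Fin n) (Fin m) ℝ) (D : Matrix (Fin p) (Fin m) ℝ)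
    (U Us : Set (Fin m → ℝ)) (Q : Matrix (Fin n) (Fin n) ℝ) (R : Matrix (Fin m) (Fin m) ℝ)
    (S : Matrix (Fin p) (Fin p) ℝ) (yr : Fin p → ℝ) (N : ℕ) (xt : Fin n → ℝ)
    (xb : ℕ → Fin n → ℝ) (ub : ℕ → Fin m → ℝ)
    (xs : Fin n → ℝ) (us : Fin m → ℝ) (ys : Fin p → ℝ) : Prop :=
  MPCfeas f0 h0 B D U Us N xt xb ub xs us ys ∧
  ∀ xb' ub' xs' us' ys', MPCfeas f0 h0 B D U Us N xt xb' ub' xs' us' ys' →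
    MPCcost Q R S yr N xb ub xs us ys ≤ MPCcost Q R S yr N xb' ub' xs' us' ys'

def rollout {n m : ℕ} (f0 : (Fin n → ℝ) → Fin n → ℝ) (B : Matrix (Fin n) (Fin m) ℝ)
    (x0 : Fin n → ℝ) (u : ℕ → Fin m → ℝ) : ℕ → Fin n → ℝ
  | 0 => x0
  | k + 1 => fdyn f0 B (rollout f0 B x0 u k) (u k)

theorem norm_le_en {k : ℕ} (x : Fin k → ℝ) : ‖x‖ ≤ en x := by
  refine (pi_norm_le_iff_of_nonneg (Real.sqrt_nonneg _)).2 fun i => ?_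
  rw [Real.norm_eq_abs]
  exact Real.abs_le_sqrt (Finset.single_le_sum (f := fun i => x i ^ 2)
    (fun j _ => sq_nonneg _) (Finset.mem_univ i))

theorem en_nonneg {k : ℕ} (x : Fin k → ℝ) : 0 ≤ en x := Real.sqrt_nonneg _

theorem en_sq {k : ℕ} (x : Fin k → ℝ) : en x ^ 2 = x ⬝ᵥ x := by
  rw [en, Real.sq_sqrt (Finset.sum_nonneg fun i _ => sq_nonneg _)]
  exact Finset.sum_congr rfl fun i _ => sq _

theorem en_le_norm {k : ℕ} (x : Fin k → ℝ) : en x ≤ Real.sqrt k * ‖x‖ := by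
  rw [en, ← Real.sqrt_sq (norm_nonneg x), ← Real.sqrt_mul (Nat.cast_nonneg k)]
  refine Real.sqrt_le_sqrt ?_
  have h : ∀ i ∈ Finset.univ, x i ^ 2 ≤ ‖x‖ ^ 2 := fun i _ => by
    rw [← sq_abs]
    exact pow_le_pow_left₀ (abs_nonneg _) (norm_le_pi_norm x i) 2
  simpa using Finset.sum_le_card_nsmul Finset.univ _ _ h

theorem dotProduct_le_en_mul_en {k : ℕ} (x y : Fin k → ℝ) : x ⬝ᵥ y ≤ en x * en y :=
  Real.sum_mul_le_sqrt_mul_sqrt Finset.univ x y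

theorem exists_bilin_bound {k : ℕ} (P : Matrix (Fin k) (Fin k) ℝ) :
    ∃ H > 0, ∀ x y : Fin k → ℝ, |x ⬝ᵥ P *ᵥ y| ≤ H * (‖x‖ * ‖y‖) := by
  refine ⟨(∑ i, ∑ j, |P i j|) + 1, by positivity, fun x y => ?_⟩
  have h : |x ⬝ᵥ P *ᵥ y| ≤ ∑ i, ∑ j, |P i j| * (‖x‖ * ‖y‖) := by
    refine (Finset.abs_sum_le_sum_abs _ _).trans (Finset.sum_le_sum fun i _ => ?_)
    rw [abs_mul]
    simp only [Matrix.mulVec, dotProduct]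
    refine (mul_le_mul_of_nonneg_left (Finset.abs_sum_le_sum_abs _ _) (abs_nonneg _)).trans ?_
    rw [Finset.mul_sum]
    refine Finset.sum_le_sum fun j _ => ?_
    rw [abs_mul]
    have h1 := norm_le_pi_norm x i
    have h2 := norm_le_pi_norm y j
    rw [Real.norm_eq_abs] at h1 h2
    calc |x i| * (|P i j| * |y j|) = |P i j| * (|x i| * |y j|) := by ring
      _ ≤ _ := by gcongr
  refine h.trans ?_
  simp only [← Finset.sum_mul]
  have : 0 ≤ ‖x‖ * ‖y‖ := by positivity
  nlinarith

theorem qn_smul {k : ℕ} (P : Matrix (Fin k) (Fin k) ℝ) (t : ℝ) (x : Fin k → ℝ) :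
    qn P (t • x) = t ^ 2 * qn P x := by
  simp only [qn, Matrix.mulVec_smul, dotProduct_smul, smul_dotProduct, smul_eq_mul]
  ring

theorem qn_add {k : ℕ} (P : Matrix (Fin k) (Fin k) ℝ) (x y : Fin k → ℝ) :
    qn P (x + y) = qn P x + (x ⬝ᵥ P *ᵥ y + y ⬝ᵥ P *ᵥ x) + qn P y := by
  simp only [qn, Matrix.mulVec_add, dotProduct_add, add_dotProduct]
  ring

theorem qn_sub {k : ℕ} (P : Matrix (Fin k) (Fin k) ℝ) (x y : Fin k → ℝ) :
    qn P (x - y) = qn P x - (x ⬝ᵥ P *ᵥ y + y ⬝ᵥ P *ᵥ x) + qn P y := by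
  simp only [qn, Matrix.mulVec_sub, dotProduct_sub, sub_dotProduct]
  ring

theorem qn_zero {k : ℕ} (P : Matrix (Fin k) (Fin k) ℝ) : qn P 0 = 0 := by simp [qn]

theorem qn_nonneg {k : ℕ} {P : Matrix (Fin k) (Fin k) ℝ} (hP : P.PosDef) (x : Fin k → ℝ) :
    0 ≤ qn P x := by
  simpa [qn] using hP.posSemidef.dotProduct_mulVec_nonneg x

theorem continuous_qn {k : ℕ} (P : Matrix (Fin k) (Fin k) ℝ) : Continuous (qn P) := by
  unfold qn
  fun_prop

theorem qn_convexComb {k : ℕ} (P : Matrix (Fin k) (Fin k) ℝ) (t : ℝ) (x y : Fin k → ℝ) :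
    qn P (x + t • (y - x)) = (1 - t) * qn P x + t * qn P y - t * (1 - t) * qn P (y - x) := by
  rw [qn_add, qn_smul]
  simp only [qn, Matrix.mulVec_smul, Matrix.mulVec_sub, dotProduct_smul, smul_dotProduct,
    dotProduct_sub, sub_dotProduct, smul_eq_mul]
  ring

theorem qn_add_le {k : ℕ} {P : Matrix (Fin k) (Fin k) ℝ} (hP : P.PosDef) {α : ℝ} (hα : 0 < α)
    (x y : Fin k → ℝ) : qn P (x + y) ≤ (1 + α) * qn P x + (1 + α⁻¹) * qn P y := by
  have h := mul_nonneg hα.le (qn_nonneg hP (x - α⁻¹ • y))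
  rw [qn_sub, qn_smul] at h
  rw [qn_add]
  simp only [Matrix.mulVec_smul, dotProduct_smul, smul_dotProduct, smul_eq_mul] at h
  have e : α * (qn P x - (α⁻¹ * x ⬝ᵥ P *ᵥ y + α⁻¹ * y ⬝ᵥ P *ᵥ x) + α⁻¹ ^ 2 * qn P y)
      = α * qn P x - (x ⬝ᵥ P *ᵥ y + y ⬝ᵥ P *ᵥ x) + α⁻¹ * qn P y := by
    field_simp
  rw [e] at h
  linarith

theorem exists_qn_upper {k : ℕ} (P : Matrix (Fin k) (Fin k) ℝ) :
    ∃ H > 0, ∀ x : Fin k → ℝ, qn P x ≤ H * ‖x‖ ^ 2 := by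
  obtain ⟨H, hH, h⟩ := exists_bilin_bound P
  exact ⟨H, hH, fun x => by rw [sq]; exact (le_abs_self _).trans (h x x)⟩

theorem exists_qn_lower {k : ℕ} {P : Matrix (Fin k) (Fin k) ℝ} (hP : P.PosDef) :
    ∃ c > 0, ∀ x : Fin k → ℝ, c * ‖x‖ ^ 2 ≤ qn P x := by
  obtain ⟨c, hc, h⟩ := (isCompact_sphere (0 : Fin k → ℝ) 1).exists_forall_le'
    (continuous_qn P).continuousOn (a := 0) fun x hx => by
      have hx0 : x ≠ 0 := by
        rintro rfl
        simp at hx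
      simpa [qn] using hP.dotProduct_mulVec_pos hx0
  refine ⟨c, hc, fun x => ?_⟩
  rcases eq_or_ne x 0 with rfl | hx
  · simp [qn]
  have hx' : ‖x‖ ≠ 0 := norm_ne_zero_iff.2 hx
  have h1 := h (‖x‖⁻¹ • x) (by simp [norm_smul, hx'])
  rw [qn_smul] at h1
  have h2 := mul_le_mul_of_nonneg_right h1 (sq_nonneg ‖x‖)
  calc c * ‖x‖ ^ 2 ≤ _ := h2
    _ = qn P x := by field_simp

theorem exists_norm_le_sqrt_qn {k : ℕ} {P : Matrix (Fin k) (Fin k) ℝ} (hP : P.PosDef) :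
    ∃ c > 0, ∀ (x : Fin k → ℝ) (s : ℝ), 0 ≤ s → qn P x ≤ s ^ 2 → ‖x‖ ≤ c * s := by
  obtain ⟨c, hc, h⟩ := exists_qn_lower hP
  refine ⟨(Real.sqrt c)⁻¹, by positivity, fun x s hs hx => ?_⟩
  rw [← div_eq_inv_mul, le_div_iff₀ (by positivity)]
  refine le_of_sq_le_sq ?_ hs
  rw [mul_pow, Real.sq_sqrt hc.le]
  linarith [h x]

theorem exists_qn_perturb {k : ℕ} {P : Matrix (Fin k) (Fin k) ℝ} (hP : P.PosDef) :
    ∃ H > 0, ∀ x y : Fin k → ℝ,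
      qn P y ≤ qn P x + H * (Real.sqrt (qn P x) * ‖y - x‖ + ‖y - x‖ ^ 2) := by
  obtain ⟨H, hH, h⟩ := exists_bilin_bound P
  obtain ⟨c, hc, h'⟩ := exists_norm_le_sqrt_qn hP
  refine ⟨2 * H * c + H, by positivity, fun x y => ?_⟩
  have h1 := h' x _ (Real.sqrt_nonneg _) (Real.sq_sqrt (qn_nonneg hP x)).ge
  have e : qn P y = qn P (x + (y - x)) := by congr 1; abel
  rw [e, qn_add]
  set d := y - x
  have h2 := (le_abs_self _).trans (h x d)
  have h3 := (le_abs_self _).trans (h d x)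
  have h4 := (le_abs_self _).trans (h d d)
  have h5 : ‖x‖ * ‖d‖ ≤ c * Real.sqrt (qn P x) * ‖d‖ := by gcongr
  have h6 := mul_le_mul_of_nonneg_left h5 hH.le
  have h7 : 0 ≤ Real.sqrt (qn P x) * ‖d‖ := by positivity
  have h8 : 0 ≤ ‖d‖ ^ 2 := by positivity
  have h9 : 0 ≤ H * (Real.sqrt (qn P x) * ‖d‖) := by positivity
  have h10 : 0 ≤ H * c * ‖d‖ ^ 2 := by positivity
  have h11 : qn P d ≤ H * ‖d‖ ^ 2 := by rw [sq]; exact h4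
  nlinarith

theorem jac_mulVec {n q : ℕ} (g : (Fin n → ℝ) → Fin q → ℝ) (x v : Fin n → ℝ) :
    jac g x *ᵥ v = fderiv ℝ g x v := by
  rw [jac, ← Matrix.toLin'_apply, Matrix.toLin'_toMatrix']
  rfl

theorem flin_eq {n m : ℕ} (f0 : (Fin n → ℝ) → Fin n → ℝ) (B : Matrix (Fin n) (Fin m) ℝ)
    (xt x : Fin n → ℝ) (u : Fin m → ℝ) :
    flin f0 B xt x u = f0 xt + fderiv ℝ f0 xt (x - xt) + B *ᵥ u := by
  rw [flin, jac_mulVec, jac_mulVec, map_sub]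
  abel

theorem hlin_eq {n p m : ℕ} (h0 : (Fin n → ℝ) → Fin p → ℝ) (D : Matrix (Fin p) (Fin m) ℝ)
    (xt x : Fin n → ℝ) (u : Fin m → ℝ) :
    hlin h0 D xt x u = h0 xt + fderiv ℝ h0 xt (x - xt) + D *ᵥ u := by
  rw [hlin, jac_mulVec, jac_mulVec, map_sub]
  abel

theorem exists_taylor_bounds {E F : Type*} [NormedAddCommGroup E] [NormedSpace ℝ E]
    [FiniteDimensional ℝ E] [NormedAddCommGroup F] [NormedSpace ℝ F] {g : E → F}
    (hg : ContDiff ℝ 2 g) (ρ : ℝ) :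
    ∃ M ≥ 1, ∀ x ∈ Metric.closedBall (0 : E) ρ,
      ‖fderiv ℝ g x‖ ≤ M ∧ ∀ y ∈ Metric.closedBall (0 : E) ρ,
        ‖fderiv ℝ g y - fderiv ℝ g x‖ ≤ M * ‖y - x‖ ∧ ‖g y - g x‖ ≤ M * ‖y - x‖ ∧
        ‖g y - g x - fderiv ℝ g x (y - x)‖ ≤ M * ‖y - x‖ ^ 2 := by
  have hK : IsCompact (Metric.closedBall (0 : E) ρ) :=
    FiniteDimensional.proper ℝ E |>.isCompact_closedBall 0 ρ
  have hc : Convex ℝ (Metric.closedBall (0 : E) ρ) := convex_closedBall 0 ρ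
  have hg' : ContDiff ℝ 1 (fderiv ℝ g) := hg.fderiv_right (by norm_num)
  obtain ⟨M1, h1⟩ := hK.exists_bound_of_continuousOn hg'.continuous.continuousOn
  obtain ⟨M2, h2⟩ := hK.exists_bound_of_continuousOn
    (hg'.continuous_fderiv (by norm_num)).continuousOn
  set M := max 1 (max M1 M2)
  have hM1 : M1 ≤ M := (le_max_left _ _).trans (le_max_right _ _)
  have hM2 : M2 ≤ M := (le_max_right _ _).trans (le_max_right _ _)
  have hM0 : 1 ≤ M := le_max_left _ _
  have hL : ∀ x ∈ Metric.closedBall (0 : E) ρ, ∀ y ∈ Metric.closedBall (0 : E) ρ,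
      ‖fderiv ℝ g y - fderiv ℝ g x‖ ≤ M * ‖y - x‖ := fun x hx y hy =>
    hc.norm_image_sub_le_of_norm_fderiv_le
      (fun z _ => (hg'.differentiable (by norm_num)).differentiableAt)
      (fun z hz => (h2 z hz).trans hM2) hx hy
  refine ⟨M, hM0, fun x hx => ⟨(h1 x hx).trans hM1, fun y hy => ⟨hL x hx y hy, ?_, ?_⟩⟩⟩
  · exact hc.norm_image_sub_le_of_norm_fderiv_le
      (fun z _ => (hg.differentiable (by norm_num)).differentiableAt)
      (fun z hz => (h1 z hz).trans hM1) hx hy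
  · have hseg := hc.segment_subset hx hy
    have := (convex_segment (𝕜 := ℝ) x y).norm_image_sub_le_of_norm_fderiv_le'
      (f := g) (φ := fderiv ℝ g x) (C := M * ‖y - x‖)
      (fun z _ => (hg.differentiable (by norm_num)).differentiableAt)
      (fun z hz => by
        refine (hL x hx z (hseg hz)).trans ?_
        gcongr
        rw [segment_eq_image'] at hz
        obtain ⟨t, ht, rfl⟩ := hz
        rw [add_sub_cancel_left, norm_smul, Real.norm_eq_abs, abs_of_nonneg ht.1]
        exact mul_le_of_le_one_left (norm_nonneg _) ht.2)
      (left_mem_segment ℝ x y) (right_mem_segment ℝ x y)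
    calc _ ≤ _ := this
      _ = _ := by ring

theorem exists_steering {n m : ℕ} {A : Matrix (Fin n) (Fin n) ℝ} {B : Matrix (Fin n) (Fin m) ℝ}
    {μ : ℝ} (hμ : 0 < μ)
    (h : ∀ w : Fin n → ℝ,
      μ * en w ≤ Real.sqrt (∑ k ∈ Finset.range n, en ((A ^ k * B)ᵀ *ᵥ w) ^ 2))
    (δ : Fin n → ℝ) :
    ∃ v : ℕ → Fin m → ℝ, (∀ k, en (v k) ≤ μ⁻¹ * en δ) ∧ (∀ k, n ≤ k → v k = 0) ∧
      ∑ k ∈ Finset.range n, (A ^ k * B) *ᵥ v k = δ := by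
  set W : Matrix (Fin n) (Fin n) ℝ := ∑ k ∈ Finset.range n, (A ^ k * B) * (A ^ k * B)ᵀ
  have hWv : ∀ w, W *ᵥ w = ∑ k ∈ Finset.range n, (A ^ k * B) *ᵥ ((A ^ k * B)ᵀ *ᵥ w) := by
    intro w
    simp only [W, Matrix.sum_mulVec, Matrix.mulVec_mulVec]
  have hWq : ∀ w, w ⬝ᵥ W *ᵥ w = ∑ k ∈ Finset.range n, en ((A ^ k * B)ᵀ *ᵥ w) ^ 2 := by
    intro w
    rw [hWv, dotProduct_sum]
    refine Finset.sum_congr rfl fun k _ => ?_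
    rw [en_sq, Matrix.dotProduct_mulVec, ← Matrix.mulVec_transpose]
  have hsq : ∀ w, (μ * en w) ^ 2 ≤ w ⬝ᵥ W *ᵥ w := by
    intro w
    rw [hWq, ← Real.sq_sqrt (Finset.sum_nonneg fun k _ => sq_nonneg _)]
    exact pow_le_pow_left₀ (mul_nonneg hμ.le (en_nonneg w)) (h w) 2
  have hinj : Function.Injective (Matrix.mulVecLin W) := by
    rw [← LinearMap.ker_eq_bot, LinearMap.ker_eq_bot']
    intro w hw
    have h1 := hsq w
    rw [← Matrix.mulVecLin_apply, hw, dotProduct_zero] at h1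
    have h2 : μ * en w = 0 := by nlinarith [sq_nonneg (μ * en w)]
    have h3 : en w = 0 := (mul_eq_zero.1 h2).resolve_left hμ.ne'
    exact norm_le_zero_iff.1 (h3 ▸ norm_le_en w)
  obtain ⟨w, hw⟩ := LinearMap.injective_iff_surjective.1 hinj δ
  rw [Matrix.mulVecLin_apply] at hw
  have hwd : w ⬝ᵥ W *ᵥ w ≤ en w * en δ := hw ▸ dotProduct_le_en_mul_en w δ
  have hw1 : μ ^ 2 * en w ≤ en δ := by
    rcases (en_nonneg w).eq_or_lt with h0 | h0
    · rw [← h0, mul_zero]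
      exact en_nonneg δ
    · refine le_of_mul_le_mul_left ?_ h0
      nlinarith [hsq w]
  refine ⟨fun k => if k < n then (A ^ k * B)ᵀ *ᵥ w else 0, fun k => ?_,
    fun k hk => if_neg (not_lt.2 hk), ?_⟩
  · have hδ := en_nonneg δ
    by_cases hk : k < n
    · simp only [hk, if_true]
      refine le_of_sq_le_sq ?_ (by positivity)
      have h1 : en ((A ^ k * B)ᵀ *ᵥ w) ^ 2 ≤ w ⬝ᵥ W *ᵥ w := by
        rw [hWq]
        exact Finset.single_le_sum (f := fun k => en ((A ^ k * B)ᵀ *ᵥ w) ^ 2)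
          (fun j _ => sq_nonneg _) (Finset.mem_range.2 hk)
      have h2 : en w ≤ (μ ^ 2)⁻¹ * en δ := by
        rw [← div_eq_inv_mul, le_div_iff₀ (by positivity)]
        linarith
      calc _ ≤ en w * en δ := h1.trans hwd
        _ ≤ (μ ^ 2)⁻¹ * en δ * en δ := by gcongr
        _ = _ := by ring
    · simp only [hk, if_false]
      simp only [en, Pi.zero_apply, ne_eq, OfNat.ofNat_ne_zero, not_false_eq_true, zero_pow,
        Finset.sum_const_zero, Real.sqrt_zero]
      positivity
  · rw [← hw, hWv]
    exact Finset.sum_congr rfl fun k hk => by simp only [if_pos (Finset.mem_range.1 hk)]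

theorem linear_recursion_eq {n m : ℕ} (A : Matrix (Fin n) (Fin n) ℝ)
    (B : Matrix (Fin n) (Fin m) ℝ) (z : ℕ → Fin n → ℝ) (v : ℕ → Fin m → ℝ) (z0 : z 0 = 0) (N : ℕ)
    (hz : ∀ k < N, z (k + 1) = A *ᵥ z k + B *ᵥ v k) :
    ∀ k ≤ N, z k = ∑ j ∈ Finset.range k, (A ^ j * B) *ᵥ v (k - 1 - j) := by
  intro k
  induction k with
  | zero => simp [z0]
  | succ k ih =>
    intro hk
    rw [hz k hk, ih (by omega), Finset.sum_range_succ', Matrix.mulVec_sum]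
    congr 1
    · refine Finset.sum_congr rfl fun j hj => ?_
      rw [Matrix.mulVec_mulVec, ← Matrix.mul_assoc, ← pow_succ']
      congr 2
      omega
    · simp

theorem exists_driven_bound (a b : ℝ) (ha : 0 ≤ a) (hb : 0 ≤ b) (N : ℕ) :
    ∃ K > 0, ∀ (z : ℕ → ℝ) (η : ℝ), 0 ≤ η → z 0 ≤ η → (∀ k < N, z (k + 1) ≤ a * z k + b * η) →
      ∀ k ≤ N, z k ≤ K * η := by
  refine ⟨(1 + a + b) ^ N, by positivity, fun z η hη h0 hz => ?_⟩
  have h : ∀ k ≤ N, z k ≤ (1 + a + b) ^ k * η := by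
    intro k
    induction k with
    | zero => simpa using h0
    | succ k ih =>
      intro hk
      have h1 := mul_le_mul_of_nonneg_left (ih (by omega)) ha
      have h2 : 1 ≤ (1 + a + b) ^ k := one_le_pow₀ (by linarith)
      have h3 : b * η ≤ b * ((1 + a + b) ^ k * η) := by
        gcongr
        exact le_mul_of_one_le_left hη h2
      have h4 := hz k hk
      have h5 : 0 ≤ (1 + a + b) ^ k * η := by positivity
      rw [pow_succ]
      nlinarith
  intro k hk
  refine (h k hk).trans ?_
  gcongr
  linarith

theorem exists_mulVec_bound {k l : ℕ} (B : Matrix (Fin k) (Fin l) ℝ) :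
    ∃ b ≥ 0, ∀ v, ‖B *ᵥ v‖ ≤ b * ‖v‖ :=
  ⟨_, norm_nonneg _, (LinearMap.toContinuousLinearMap (Matrix.mulVecLin B)).le_opNorm⟩

/-- Under uniform controllability, a perturbed linear recursion can be steered to the origin in
`N ≥ n` steps with inputs and states proportional to the size of the perturbation. -/
theorem exists_deadbeat {n m N : ℕ} (hN : n ≤ N) {f0 : (Fin n → ℝ) → Fin n → ℝ}
    {B : Matrix (Fin n) (Fin m) ℝ} {μ : ℝ} (hμ : 0 < μ) (hA3 : A3holds f0 B μ) {a : ℝ}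
    (ha : 0 ≤ a) :
    ∃ K > 0, ∀ q, ‖fderiv ℝ f0 q‖ ≤ a → ∀ (e0 : Fin n → ℝ) (w : ℕ → Fin n → ℝ) (η : ℝ),
      ‖e0‖ ≤ η → (∀ k, ‖w k‖ ≤ η) → ∃ (e : ℕ → Fin n → ℝ) (c : ℕ → Fin m → ℝ),
        e 0 = e0 ∧ (∀ k, e (k + 1) = fderiv ℝ f0 q (e k) + B *ᵥ c k + w k) ∧ e N = 0 ∧
        (∀ k ≤ N, ‖e k‖ ≤ K * η) ∧ ∀ k, ‖c k‖ ≤ K * η := by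
  obtain ⟨b, hb, hB⟩ := exists_mulVec_bound B
  obtain ⟨K1, hK1, h1⟩ := exists_driven_bound a 1 ha zero_le_one N
  set K2 : ℝ := μ⁻¹ * (Real.sqrt n * K1)
  have hK2 : 0 ≤ K2 := by positivity
  obtain ⟨K3, hK3, h3⟩ := exists_driven_bound a (b * K2 + 1) ha (by positivity) N
  refine ⟨max K2 K3, lt_max_of_lt_right hK3, fun q hq e0 w η he0 hw => ?_⟩
  have hη : 0 ≤ η := (norm_nonneg _).trans he0
  set A := fderiv ℝ f0 q
  have hA : ∀ v, ‖A v‖ ≤ a * ‖v‖ := fun v =>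
    (A.le_opNorm v).trans (mul_le_mul_of_nonneg_right hq (norm_nonneg v))
  have hj : ∀ v, jac f0 q *ᵥ v = A v := jac_mulVec f0 q
  let r : ℕ → Fin n → ℝ := fun k => Nat.rec e0 (fun k z => A z + w k) k
  have hr : ∀ k, r (k + 1) = A (r k) + w k := fun k => rfl
  have hrN : ‖r N‖ ≤ K1 * η := h1 (fun k => ‖r k‖) η hη he0 (fun k _ => by
    rw [hr]
    refine (norm_add_le _ _).trans (add_le_add (hA _) ?_)
    rw [one_mul]
    exact hw k) N le_rfl
  obtain ⟨v, hv, hv0, hvs⟩ := exists_steering hμ (hA3 q) (-r N)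
  let c : ℕ → Fin m → ℝ := fun k => if k < N then v (N - 1 - k) else 0
  have hvk : ∀ k, ‖v k‖ ≤ K2 * η := fun k => calc
    ‖v k‖ ≤ μ⁻¹ * en (-r N) := (norm_le_en _).trans (hv k)
    _ ≤ μ⁻¹ * (Real.sqrt n * (K1 * η)) := by
      gcongr
      refine (en_le_norm _).trans ?_
      rw [norm_neg]
      gcongr
    _ = K2 * η := by ring
  have hc : ∀ k, ‖c k‖ ≤ K2 * η := fun k => by
    by_cases hk : k < N
    · simp only [c, hk, if_true]
      exact hvk _
    · simp only [c, hk, if_false, norm_zero]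
      positivity
  let e : ℕ → Fin n → ℝ := fun k => Nat.rec e0 (fun k z => A z + B *ᵥ c k + w k) k
  have he : ∀ k, e (k + 1) = A (e k) + B *ᵥ c k + w k := fun k => rfl
  refine ⟨e, c, rfl, he, ?_, ?_, fun k => (hc k).trans ?_⟩
  · have := linear_recursion_eq (jac f0 q) B (fun k => e k - r k) c (sub_self _) N
      (fun k _ => by
        simp only [he, hr, hj, map_sub]
        abel) N le_rfl
    rw [← sub_eq_zero, ← sub_add_cancel (e N) (r N), this, sub_zero]
    have hs : ∑ j ∈ Finset.range N, (jac f0 q ^ j * B) *ᵥ c (N - 1 - j) =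
        ∑ j ∈ Finset.range n, (jac f0 q ^ j * B) *ᵥ v j := by
      rw [← Finset.sum_subset (Finset.range_subset_range.2 hN)]
      · refine Finset.sum_congr rfl fun j hj => ?_
        have : j < N := (Finset.mem_range.1 hj).trans_le hN
        simp only [c]
        rw [if_pos (by omega)]
        congr 2
        omega
      · intro j hj hj'
        rw [Finset.mem_range] at hj hj'
        simp only [c]
        rw [if_pos (by omega), hv0 _ (by omega), Matrix.mulVec_zero]
    rw [hs, hvs, neg_add_cancel]
  · intro k hk
    refine (h3 (fun k => ‖e k‖) η hη he0 (fun k _ => ?_) k hk).trans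
      (mul_le_mul_of_nonneg_right (le_max_right _ _) hη)
    rw [he]
    have e1 := hB (c k)
    have e2 := mul_le_mul_of_nonneg_left (hc k) hb
    have e3 := hA (e k)
    have e4 := hw k
    calc _ ≤ ‖A (e k)‖ + ‖B *ᵥ c k‖ + ‖w k‖ := norm_add₃_le
      _ ≤ a * ‖e k‖ + (b * K2 + 1) * η := by linarith
  · exact mul_le_mul_of_nonneg_right (le_max_left _ _) hη

theorem mem_Zlin_iff {n m : ℕ} {f0 : (Fin n → ℝ) → Fin n → ℝ} {B : Matrix (Fin n) (Fin m) ℝ}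
    {Us : Set (Fin m → ℝ)} {q x : Fin n → ℝ} {u : Fin m → ℝ} :
    (x, u) ∈ Zlin f0 B Us q ↔ u ∈ Us ∧ x = f0 q + fderiv ℝ f0 q (x - q) + B *ᵥ u := by
  simp only [Zlin, Set.mem_ofPred_eq, flin_eq]

theorem exists_resolvent_bound {n : ℕ} {f0 : (Fin n → ℝ) → Fin n → ℝ} {σ : ℝ} (hσ : 0 < σ)
    (h : A4holds f0 σ) :
    ∃ c > 0, ∀ q v : Fin n → ℝ, ‖v‖ ≤ c * ‖v - fderiv ℝ f0 q v‖ := by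
  refine ⟨(Real.sqrt n + 1) / σ, by positivity, fun q v => ?_⟩
  have h1 := h q v
  rw [jac_mulVec] at h1
  have h2 := en_le_norm (v - fderiv ℝ f0 q v)
  have h3 := mul_le_mul_of_nonneg_left (norm_le_en v) hσ.le
  rw [div_mul_eq_mul_div, le_div_iff₀ hσ]
  have h4 := norm_nonneg (v - fderiv ℝ f0 q v)
  linarith

theorem exists_resolvent {n : ℕ} {f0 : (Fin n → ℝ) → Fin n → ℝ} {σ : ℝ} (hσ : 0 < σ)
    (h : A4holds f0 σ) (q w : Fin n → ℝ) : ∃ v, v - fderiv ℝ f0 q v = w := by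
  obtain ⟨c, hc, hb⟩ := exists_resolvent_bound hσ h
  let L : (Fin n → ℝ) →ₗ[ℝ] (Fin n → ℝ) := LinearMap.id - (fderiv ℝ f0 q).toLinearMap
  have hinj : Function.Injective L := by
    rw [← LinearMap.ker_eq_bot, LinearMap.ker_eq_bot']
    intro v hv
    have h1 := hb q v
    have h2 : v - fderiv ℝ f0 q v = 0 := hv
    rw [h2, norm_zero, mul_zero] at h1
    exact norm_le_zero_iff.1 h1
  exact LinearMap.injective_iff_surjective.1 hinj w

theorem exists_steady_le_output {n m p : ℕ} {f0 : (Fin n → ℝ) → Fin n → ℝ}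
    {h0 : (Fin n → ℝ) → Fin p → ℝ} {B : Matrix (Fin n) (Fin m) ℝ} {D : Matrix (Fin p) (Fin m) ℝ}
    {σ : ℝ} (hσ : 0 < σ) (h : A2holds f0 h0 B D σ) (Us : Set (Fin m → ℝ)) :
    ∃ c > 0, ∀ (q x x' : Fin n → ℝ) (u u' : Fin m → ℝ), (x, u) ∈ Zlin f0 B Us q →
      (x', u') ∈ Zlin f0 B Us q → ‖x' - x‖ ≤ c * ‖hlin h0 D q x' u' - hlin h0 D q x u‖ := by
  refine ⟨(Real.sqrt p + 1) / σ, by positivity, fun q x x' u u' hx hx' => ?_⟩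
  rw [mem_Zlin_iff] at hx hx'
  have h1 := h q (x' - x) (u' - u)
  have e1 : fderiv ℝ f0 q (x' - x) - (x' - x) + B *ᵥ (u' - u) = 0 := by
    have e : x' - x = fderiv ℝ f0 q (x' - x) + B *ᵥ (u' - u) := by
      conv_lhs => rw [hx.2, hx'.2]
      simp only [map_sub, Matrix.mulVec_sub]
      abel
    rw [sub_add_eq_add_sub, ← e, sub_self]
  have e2 : fderiv ℝ h0 q (x' - x) + D *ᵥ (u' - u) = hlin h0 D q x' u' - hlin h0 D q x u := by
    simp only [hlin_eq, map_sub, Matrix.mulVec_sub]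
    abel
  rw [jac_mulVec, jac_mulVec, e1, e2] at h1
  have e3 : en (0 : Fin n → ℝ) ^ 2 = 0 := by rw [en_sq, dotProduct_zero]
  rw [e3, zero_add, Real.sqrt_sq (en_nonneg _)] at h1
  have h2 : en (x' - x) ≤ Real.sqrt (en (x' - x) ^ 2 + en (u' - u) ^ 2) :=
    Real.le_sqrt_of_sq_le (le_add_of_nonneg_right (sq_nonneg _))
  have h3 := mul_le_mul_of_nonneg_left ((norm_le_en _).trans h2) hσ.le
  have h4 := en_le_norm (hlin h0 D q x' u' - hlin h0 D q x u)
  rw [div_mul_eq_mul_div, le_div_iff₀ hσ]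
  have h5 := norm_nonneg (hlin h0 D q x' u' - hlin h0 D q x u)
  linarith

theorem Zlin_convexComb {n m : ℕ} {f0 : (Fin n → ℝ) → Fin n → ℝ} {B : Matrix (Fin n) (Fin m) ℝ}
    {Us : Set (Fin m → ℝ)} (hUs : Convex ℝ Us) {q x x' : Fin n → ℝ} {u u' : Fin m → ℝ}
    (hx : (x, u) ∈ Zlin f0 B Us q) (hx' : (x', u') ∈ Zlin f0 B Us q) {t : ℝ} (ht0 : 0 ≤ t)
    (ht1 : t ≤ 1) : (x + t • (x' - x), u + t • (u' - u)) ∈ Zlin f0 B Us q := by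
  rw [mem_Zlin_iff] at *
  refine ⟨hUs.add_smul_sub_mem hx.1 hx'.1 ⟨ht0, ht1⟩, ?_⟩
  have e : x' - x = fderiv ℝ f0 q (x' - x) + B *ᵥ (u' - u) := by
    conv_lhs => rw [hx.2, hx'.2]
    simp only [map_sub, Matrix.mulVec_sub]
    abel
  calc x + t • (x' - x) = (f0 q + fderiv ℝ f0 q (x - q) + B *ᵥ u)
        + t • (fderiv ℝ f0 q (x' - x) + B *ᵥ (u' - u)) := by rw [← e, ← hx.2]
    _ = _ := by
      rw [add_sub_right_comm, map_add, map_smul, Matrix.mulVec_add, Matrix.mulVec_smul, smul_add]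
      abel

theorem hlin_convexComb {n m p : ℕ} (h0 : (Fin n → ℝ) → Fin p → ℝ)
    (D : Matrix (Fin p) (Fin m) ℝ) (q x x' : Fin n → ℝ) (u u' : Fin m → ℝ) (t : ℝ) :
    hlin h0 D q (x + t • (x' - x)) (u + t • (u' - u)) =
      hlin h0 D q x u + t • (hlin h0 D q x' u' - hlin h0 D q x u) := by
  have e : hlin h0 D q x' u' - hlin h0 D q x u = fderiv ℝ h0 q (x' - x) + D *ᵥ (u' - u) := by
    simp only [hlin_eq, map_sub, Matrix.mulVec_sub]
    abel
  rw [e, hlin_eq, hlin_eq, add_sub_right_comm, map_add, map_smul, Matrix.mulVec_add,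
    Matrix.mulVec_smul, smul_add]
  abel

theorem isCompact_Zlin {n m : ℕ} {f0 : (Fin n → ℝ) → Fin n → ℝ} {B : Matrix (Fin n) (Fin m) ℝ}
    {Us : Set (Fin m → ℝ)} (hUs : IsClosed Us) {𝓑 : Set ((Fin n → ℝ) × (Fin m → ℝ))}
    (h𝓑 : IsCompact 𝓑) {q : Fin n → ℝ} (hq : Zlin f0 B Us q ⊆ 𝓑) :
    IsCompact (Zlin f0 B Us q) := by
  refine h𝓑.of_isClosed_subset ?_ hq
  refine IsClosed.inter (hUs.preimage continuous_snd) (isClosed_eq continuous_fst ?_)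
  unfold flin
  fun_prop

theorem Jeqlin_le {n m p : ℕ} {f0 : (Fin n → ℝ) → Fin n → ℝ} {h0 : (Fin n → ℝ) → Fin p → ℝ}
    {B : Matrix (Fin n) (Fin m) ℝ} {D : Matrix (Fin p) (Fin m) ℝ} {Us : Set (Fin m → ℝ)}
    {S : Matrix (Fin p) (Fin p) ℝ} (hS : S.PosDef) {yr : Fin p → ℝ} {q x : Fin n → ℝ}
    {u : Fin m → ℝ} (hx : (x, u) ∈ Zlin f0 B Us q) :
    Jeqlin f0 h0 B D Us S yr q ≤ qn S (hlin h0 D q x u - yr) := by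
  refine csInf_le ⟨0, ?_⟩ ⟨(x, u), hx, rfl⟩
  rintro c ⟨z, -, rfl⟩
  exact qn_nonneg hS _

theorem exists_Jeqlin_eq {n m p : ℕ} {f0 : (Fin n → ℝ) → Fin n → ℝ}
    {h0 : (Fin n → ℝ) → Fin p → ℝ} {B : Matrix (Fin n) (Fin m) ℝ} {D : Matrix (Fin p) (Fin m) ℝ}
    {Us : Set (Fin m → ℝ)} {S : Matrix (Fin p) (Fin p) ℝ} {yr : Fin p → ℝ} {q : Fin n → ℝ}
    (hc : IsCompact (Zlin f0 B Us q)) (hne : (Zlin f0 B Us q).Nonempty) :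
    ∃ x u, (x, u) ∈ Zlin f0 B Us q ∧
      Jeqlin f0 h0 B D Us S yr q = qn S (hlin h0 D q x u - yr) := by
  have hcont : Continuous fun z : (Fin n → ℝ) × (Fin m → ℝ) =>
      qn S (hlin h0 D q z.1 z.2 - yr) := by
    refine (continuous_qn S).comp (Continuous.sub ?_ continuous_const)
    unfold hlin
    fun_prop
  obtain ⟨z, hz, hmin⟩ := hc.exists_isMinOn hne hcont.continuousOn
  refine ⟨z.1, z.2, hz, IsLeast.csInf_eq ⟨⟨z, hz, rfl⟩, ?_⟩⟩
  rintro c ⟨z', hz', rfl⟩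
  exact hmin hz'

/-- Quadratic growth of the steady-state cost around its minimizer. -/
theorem exists_steady_quadratic_growth {n m p : ℕ} {f0 : (Fin n → ℝ) → Fin n → ℝ}
    {h0 : (Fin n → ℝ) → Fin p → ℝ} {B : Matrix (Fin n) (Fin m) ℝ} {D : Matrix (Fin p) (Fin m) ℝ}
    {Us : Set (Fin m → ℝ)} (hUs : Convex ℝ Us) {S : Matrix (Fin p) (Fin p) ℝ} (hS : S.PosDef)
    {σ : ℝ} (hσ : 0 < σ) (h : A2holds f0 h0 B D σ) (yr : Fin p → ℝ) :
    ∃ c > 0, ∀ (q x x' : Fin n → ℝ) (u u' : Fin m → ℝ), (x, u) ∈ Zlin f0 B Us q →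
      (x', u') ∈ Zlin f0 B Us q →
      Jeqlin f0 h0 B D Us S yr q = qn S (hlin h0 D q x u - yr) →
      ‖x' - x‖ ^ 2 ≤ c * (qn S (hlin h0 D q x' u' - yr) - Jeqlin f0 h0 B D Us S yr q) := by
  obtain ⟨c, hc, h1⟩ := exists_steady_le_output hσ h Us
  obtain ⟨l, hl, h2⟩ := exists_qn_lower hS
  refine ⟨2 * c ^ 2 / l, by positivity, fun q x x' u u' hx hx' hJ => ?_⟩
  have h3 := Jeqlin_le (h0 := h0) (D := D) hS (yr := yr)
    (Zlin_convexComb hUs hx hx' (t := 1 / 2) (by norm_num) (by norm_num))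
  rw [hlin_convexComb] at h3
  set y := hlin h0 D q x u
  set y' := hlin h0 D q x' u'
  have e : y + (1 / 2 : ℝ) • (y' - y) - yr
      = (y - yr) + (1 / 2 : ℝ) • ((y' - yr) - (y - yr)) := by
    rw [sub_sub_sub_cancel_right]
    abel
  rw [e, qn_convexComb, sub_sub_sub_cancel_right, ← hJ] at h3
  have h4 := h2 (y' - y)
  have h5 : ‖x' - x‖ ^ 2 ≤ c ^ 2 * ‖y' - y‖ ^ 2 := by
    rw [← mul_pow]
    exact pow_le_pow_left₀ (norm_nonneg _) (h1 q x x' u u' hx hx') 2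
  rw [div_mul_eq_mul_div, le_div_iff₀ hl]
  have h6 : l * ‖y' - y‖ ^ 2 ≤ 2 * (qn S (y' - yr) - Jeqlin f0 h0 B D Us S yr q) := by linarith
  have h7 := mul_le_mul_of_nonneg_left h6 (sq_nonneg c)
  nlinarith [mul_le_mul_of_nonneg_right h5 hl.le]

/-- Moving the linearization point perturbs steady states by a second-order amount. -/
theorem exists_steady_transfer {n m p : ℕ} {f0 : (Fin n → ℝ) → Fin n → ℝ}
    {h0 : (Fin n → ℝ) → Fin p → ℝ} (hf0 : ContDiff ℝ 2 f0) (hh0 : ContDiff ℝ 2 h0)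
    (B : Matrix (Fin n) (Fin m) ℝ) (D : Matrix (Fin p) (Fin m) ℝ) (Us : Set (Fin m → ℝ))
    {σ : ℝ} (hσ : 0 < σ) (h : A4holds f0 σ) (ρ : ℝ) :
    ∃ C > 0, ∀ q ∈ Metric.closedBall (0 : Fin n → ℝ) ρ,
      ∀ q' ∈ Metric.closedBall (0 : Fin n → ℝ) ρ, ∀ x u, (x, u) ∈ Zlin f0 B Us q →
      ∃ x', (x', u) ∈ Zlin f0 B Us q' ∧
        ‖x' - x‖ ≤ C * (‖q' - q‖ * (‖x - q‖ + ‖q' - q‖)) ∧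
        ‖hlin h0 D q' x' u - hlin h0 D q x u‖ ≤ C * (‖q' - q‖ * (‖x - q‖ + ‖q' - q‖)) := by
  obtain ⟨c, hc, hb⟩ := exists_resolvent_bound hσ h
  obtain ⟨M, hM, hf⟩ := exists_taylor_bounds hf0 ρ
  obtain ⟨M', hM', hh⟩ := exists_taylor_bounds hh0 ρ
  refine ⟨max (c * M) (M' * (c * M) + M'), lt_max_of_lt_left (by positivity),
    fun q hq q' hq' x u hx => ?_⟩
  rw [mem_Zlin_iff] at hx
  obtain ⟨d, hd⟩ := exists_resolvent hσ h q' (f0 q' + fderiv ℝ f0 q' (x - q') + B *ᵥ u - x)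
  set T := ‖q' - q‖ * (‖x - q‖ + ‖q' - q‖)
  have hT : 0 ≤ T := by positivity
  have key : ∀ {k : ℕ} (g : (Fin n → ℝ) → Fin k → ℝ) (M : ℝ),
      (∀ x ∈ Metric.closedBall (0 : Fin n → ℝ) ρ,
      ‖fderiv ℝ g x‖ ≤ M ∧ ∀ y ∈ Metric.closedBall (0 : Fin n → ℝ) ρ,
        ‖fderiv ℝ g y - fderiv ℝ g x‖ ≤ M * ‖y - x‖ ∧ ‖g y - g x‖ ≤ M * ‖y - x‖ ∧
        ‖g y - g x - fderiv ℝ g x (y - x)‖ ≤ M * ‖y - x‖ ^ 2) →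
      ‖(g q' + fderiv ℝ g q' (x - q')) - (g q + fderiv ℝ g q (x - q))‖ ≤ M * T := by
    intro k g M hg
    have e : (g q' + fderiv ℝ g q' (x - q')) - (g q + fderiv ℝ g q (x - q)) =
        (fderiv ℝ g q' - fderiv ℝ g q) (x - q) - (g q - g q' - fderiv ℝ g q' (q - q')) := by
      simp only [map_sub, _root_.sub_apply]
      abel
    rw [e]
    have h1 := ((hg q' hq').2 q hq).2.2
    have h2 := (ContinuousLinearMap.le_opNorm (fderiv ℝ g q' - fderiv ℝ g q) (x - q)).trans
      (mul_le_mul_of_nonneg_right ((hg q hq).2 q' hq').1 (norm_nonneg _))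
    rw [norm_sub_rev q q'] at h1
    calc _ ≤ _ := norm_sub_le _ _
      _ ≤ M * ‖q' - q‖ * ‖x - q‖ + M * ‖q' - q‖ ^ 2 := add_le_add h2 h1
      _ = M * T := by ring
  have hd' : ‖d‖ ≤ c * (M * T) := by
    refine (hb q' d).trans (mul_le_mul_of_nonneg_left ?_ hc.le)
    rw [hd]
    have e : f0 q' + fderiv ℝ f0 q' (x - q') + B *ᵥ u - x =
        (f0 q' + fderiv ℝ f0 q' (x - q')) - (f0 q + fderiv ℝ f0 q (x - q)) := by
      conv_lhs => rw [hx.2]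
      have : x - q' = f0 q + fderiv ℝ f0 q (x - q) + B *ᵥ u - q' := by rw [← hx.2]
      rw [← this]
      abel
    rw [e]
    exact key f0 M hf
  refine ⟨x + d, mem_Zlin_iff.2 ⟨hx.1, ?_⟩, ?_, ?_⟩
  · rw [add_sub_right_comm, map_add]
    calc x + d = x + ((d - fderiv ℝ f0 q' d) + fderiv ℝ f0 q' d) := by abel
      _ = _ := by rw [hd]; abel
  · rw [add_sub_cancel_left]
    calc ‖d‖ ≤ c * M * T := by linarith
      _ ≤ _ := by gcongr; exact le_max_left _ _
  · have e : hlin h0 D q' (x + d) u - hlin h0 D q x u = fderiv ℝ h0 q' d +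
        ((h0 q' + fderiv ℝ h0 q' (x - q')) - (h0 q + fderiv ℝ h0 q (x - q))) := by
      rw [hlin_eq, hlin_eq, add_sub_right_comm x d q', map_add]
      abel
    rw [e]
    have h1 := key h0 M' hh
    have h2 : ‖fderiv ℝ h0 q' d‖ ≤ M' * (c * (M * T)) :=
      (ContinuousLinearMap.le_opNorm _ _).trans
        (mul_le_mul (hh q' hq').1 hd' (norm_nonneg _) (by positivity))
    calc _ ≤ _ := norm_add_le _ _
      _ ≤ M' * (c * (M * T)) + M' * T := add_le_add h2 h1
      _ = (M' * (c * M) + M') * T := by ring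
      _ ≤ _ := by gcongr; exact le_max_right _ _

theorem le_mul_of_sq_le_add_mul {α β d s : ℝ} (hα : 0 ≤ α) (hβ : 0 ≤ β) (hs : 0 ≤ s)
    (hd : d ^ 2 ≤ α * s ^ 2 + β * s * d) : d ≤ (1 + α + β) * s := by
  by_contra! hlt
  have h1 : 0 ≤ (α + β) * s := by positivity
  have h2 : s < d := by nlinarith
  have h3 : α * s ^ 2 ≤ α * s * d := by
    rw [sq, ← mul_assoc]
    gcongr
  nlinarith

/-- Comparison of the steady-state costs of two nearby linearizations. -/
theorem exists_steady_cost_compare {n m p : ℕ} {f0 : (Fin n → ℝ) → Fin n → ℝ}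
    {h0 : (Fin n → ℝ) → Fin p → ℝ} (hf0 : ContDiff ℝ 2 f0) (hh0 : ContDiff ℝ 2 h0)
    {B : Matrix (Fin n) (Fin m) ℝ} {D : Matrix (Fin p) (Fin m) ℝ} {Us : Set (Fin m → ℝ)}
    (hUs : IsClosed Us) (hUsconv : Convex ℝ Us) {S : Matrix (Fin p) (Fin p) ℝ} (hS : S.PosDef)
    (yr : Fin p → ℝ) {σs : ℝ} (hσs : 0 < σs) (hA2 : A2holds f0 h0 B D σs)
    {σl : ℝ} (hσl : 0 < σl) (hA4 : A4holds f0 σl)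
    {𝓑 : Set ((Fin n → ℝ) × (Fin m → ℝ))} (h𝓑 : IsCompact 𝓑)
    (hA5 : ∀ q : Fin n → ℝ, Zlin f0 B Us q ⊆ 𝓑) (ρ : ℝ) {c : ℝ} (hc : 0 < c) :
    ∃ C > 0, ∀ q ∈ Metric.closedBall (0 : Fin n → ℝ) ρ,
      ∀ q' ∈ Metric.closedBall (0 : Fin n → ℝ) ρ, ∀ x u s θ, 0 ≤ s → s ≤ 1 → 0 ≤ θ → θ ≤ 1 →
      ‖q' - q‖ ≤ c * s → (x, u) ∈ Zlin f0 B Us q → ‖x - q‖ ≤ c * s →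
      qn S (hlin h0 D q x u - yr) ≤ Jeqlin f0 h0 B D Us S yr q + s ^ 2 →
      qn S (hlin h0 D q x u - yr) ≤ θ ^ 2 → Jeqlin f0 h0 B D Us S yr q' ≤ θ ^ 2 →
      ∃ x' xm um, (x', u) ∈ Zlin f0 B Us q' ∧ (xm, um) ∈ Zlin f0 B Us q' ∧
        Jeqlin f0 h0 B D Us S yr q' = qn S (hlin h0 D q' xm um - yr) ∧
        ‖x' - x‖ ≤ C * s ^ 2 ∧ ‖xm - x'‖ ≤ C * s ∧
        qn S (hlin h0 D q' x' u - yr) - Jeqlin f0 h0 B D Us S yr q' ≤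
          qn S (hlin h0 D q x u - yr) - Jeqlin f0 h0 B D Us S yr q +
            C * ((θ + s ^ 2) * s ^ 2) := by
  obtain ⟨b, hb0, hb⟩ := h𝓑.isBounded.exists_pos_norm_le
  obtain ⟨CT, hCT, hT⟩ := exists_steady_transfer hf0 hh0 B D Us hσl hA4 ρ
  obtain ⟨H, hH, hP⟩ := exists_qn_perturb hS
  obtain ⟨cg, hcg, hG⟩ := exists_steady_quadratic_growth hUsconv hS hσs hA2 yr
  set E0 := 2 * CT * c ^ 2 with hE0
  set E1 := E0 + 3 * c with hE1
  set E2 := CT * c * (2 * b + E1) with hE2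
  set α := cg * (H * (E0 + E0 ^ 2) + 1 + H * (1 + E2) * (CT * c * E1)) with hα
  set β := cg * (H * (1 + E2) * (CT * c)) with hβ
  set E4 := CT * c * ((1 + α + β) + E1) with hE4
  have hE0' : 0 < E0 := by positivity
  have hE1' : 0 < E1 := by positivity
  have hE2' : 0 < E2 := by positivity
  have hα' : 0 < α := by positivity
  have hβ' : 0 < β := by positivity
  have hE4' : 0 < E4 := by positivity
  refine ⟨E0 + (1 + α + β) + H * (E0 + E0 ^ 2 + E4 + E4 ^ 2), by positivity, ?_⟩
  intro q hq q' hq' x u s θ hs hs1 hθ hθ1 hqq hx hxq hyJ hyθ hJθ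
  obtain ⟨x', hx', hx1, hx2⟩ := hT q hq q' hq' x u hx
  have hbd : CT * (‖q' - q‖ * (‖x - q‖ + ‖q' - q‖)) ≤ E0 * s ^ 2 := calc
    _ ≤ CT * (c * s * (c * s + c * s)) := by gcongr
    _ = E0 * s ^ 2 := by rw [hE0]; ring
  replace hx1 := hx1.trans hbd
  replace hx2 := hx2.trans hbd
  obtain ⟨xm, um, hm, hJm⟩ := exists_Jeqlin_eq (h0 := h0) (D := D) (S := S) (yr := yr)
    (isCompact_Zlin hUs h𝓑 (hA5 q')) ⟨_, hx'⟩
  obtain ⟨xo, ho, -, ho2⟩ := hT q' hq' q hq xm um hm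
  rw [norm_sub_rev q q'] at ho2
  set J := Jeqlin f0 h0 B D Us S yr q
  set J' := Jeqlin f0 h0 B D Us S yr q'
  have hJo : J ≤ qn S (hlin h0 D q xo um - yr) := Jeqlin_le hS ho
  have hJ'0 : 0 ≤ J' := hJm ▸ qn_nonneg hS _
  have hss : s ^ 2 ≤ 1 := pow_le_one₀ hs hs1
  set d := ‖xm - x'‖ with hd
  have hd0 : 0 ≤ d := norm_nonneg _
  have hdb : d ≤ 2 * b := by
    have h1 := (norm_fst_le (xm, um)).trans (hb _ (hA5 _ hm))
    have h2 := (norm_fst_le (x', u)).trans (hb _ (hA5 _ hx'))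
    have h3 := norm_sub_le xm x'
    linarith
  have hxmq : ‖xm - q'‖ + ‖q' - q‖ ≤ d + E1 * s := by
    have e : xm - q' = (xm - x') + ((x' - x) + ((x - q) - (q' - q))) := by abel
    have h1 := norm_add_le (xm - x') ((x' - x) + ((x - q) - (q' - q)))
    have h2 := norm_add_le (x' - x) ((x - q) - (q' - q))
    have h3 := norm_sub_le (x - q) (q' - q)
    rw [← e] at h1
    have h4 : E0 * s ^ 2 ≤ E0 * s := by
      rw [sq, ← mul_assoc]
      exact mul_le_of_le_one_right (by positivity) hs1
    rw [hE1]
    linarith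
  set Y := hlin h0 D q x u - yr
  set Δ := ‖hlin h0 D q xo um - hlin h0 D q' xm um‖
  have hΔ0 : 0 ≤ Δ := norm_nonneg _
  have hΔ : Δ ≤ CT * c * s * (d + E1 * s) := by
    refine ho2.trans ?_
    calc _ ≤ CT * (c * s * (d + E1 * s)) := by gcongr
      _ = _ := by ring
  have hΔE : Δ ≤ E2 := by
    refine hΔ.trans ?_
    calc _ ≤ CT * c * 1 * (2 * b + E1 * 1) := by gcongr
      _ = E2 := by rw [hE2]; ring
  have hJJ : J ≤ J' + H * (Real.sqrt J' * Δ + Δ ^ 2) := by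
    have h1 := hP (hlin h0 D q' xm um - yr) (hlin h0 D q xo um - yr)
    rw [← hJm, sub_sub_sub_cancel_right] at h1
    exact hJo.trans h1
  have hsqJ' : Real.sqrt J' ≤ θ := Real.sqrt_le_iff.2 ⟨hθ, hJθ⟩
  have hJJ1 : J ≤ J' + H * (1 + E2) * Δ := by
    refine hJJ.trans ?_
    have h1 : Real.sqrt J' * Δ ≤ 1 * Δ := by
      gcongr
      exact hsqJ'.trans hθ1
    have h2 : Δ ^ 2 ≤ E2 * Δ := by
      rw [sq]
      gcongr
    have h3 : H * (Real.sqrt J' * Δ + Δ ^ 2) ≤ H * (1 * Δ + E2 * Δ) := by gcongr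
    linarith
  have hy' : qn S (hlin h0 D q' x' u - yr) ≤
      qn S Y + H * (θ * (E0 * s ^ 2) + (E0 * s ^ 2) ^ 2) := by
    refine (hP Y _).trans ?_
    rw [sub_sub_sub_cancel_right]
    gcongr
    exact Real.sqrt_le_iff.2 ⟨hθ, hyθ⟩
  have hs4 : (s ^ 2) ^ 2 ≤ s ^ 2 := by
    rw [sq (s ^ 2)]
    exact mul_le_of_le_one_left (sq_nonneg s) hss
  have hy1 : qn S (hlin h0 D q' x' u - yr) ≤ qn S Y + H * (E0 + E0 ^ 2) * s ^ 2 := by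
    refine hy'.trans ?_
    have h1 : θ * (E0 * s ^ 2) ≤ 1 * (E0 * s ^ 2) := by gcongr
    have h2 : E0 ^ 2 * (s ^ 2) ^ 2 ≤ E0 ^ 2 * s ^ 2 := by gcongr
    have h3 := mul_le_mul_of_nonneg_left (add_le_add h1 h2) hH.le
    rw [mul_pow]
    linarith
  have hgr : d ^ 2 ≤ cg * (qn S (hlin h0 D q' x' u - yr) - J') := by
    rw [hd, norm_sub_rev]
    exact hG q' xm x' um u hm hx' hJm
  have hds : d ≤ (1 + α + β) * s := by
    refine le_mul_of_sq_le_add_mul hα'.le hβ'.le hs (hgr.trans ?_)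
    have h1 : H * (1 + E2) * Δ ≤ H * (1 + E2) * (CT * c * s * (d + E1 * s)) := by gcongr
    calc _ ≤ cg * (H * (E0 + E0 ^ 2) * s ^ 2 + s ^ 2 +
          H * (1 + E2) * (CT * c * s * (d + E1 * s))) := by
          gcongr
          linarith
      _ = α * s ^ 2 + β * s * d := by
          rw [hα, hβ]
          ring
  have hΔ4 : Δ ≤ E4 * s ^ 2 := by
    refine hΔ.trans ?_
    calc _ ≤ CT * c * s * ((1 + α + β) * s + E1 * s) := by gcongr
      _ = _ := by rw [hE4]; ring
  have hJ4 : J ≤ J' + H * (θ * (E4 * s ^ 2) + (E4 * s ^ 2) ^ 2) := by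
    refine hJJ.trans ?_
    gcongr
  refine ⟨x', xm, um, hx', hm, hJm, hx1.trans ?_, hds.trans ?_, ?_⟩
  · refine mul_le_mul_of_nonneg_right ?_ (sq_nonneg s)
    have : 0 < H * (E0 + E0 ^ 2 + E4 + E4 ^ 2) := by positivity
    linarith
  · refine mul_le_mul_of_nonneg_right ?_ hs
    have : 0 < H * (E0 + E0 ^ 2 + E4 + E4 ^ 2) := by positivity
    linarith
  · have h1 : 0 ≤ (E0 + (1 + α + β)) * ((θ + s ^ 2) * s ^ 2) := by positivity
    have h2 : 0 ≤ H * (E0 ^ 2 + E4 ^ 2) * (θ * s ^ 2) := by positivity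
    have h3 : 0 ≤ H * (E0 + E4) * (s ^ 2 * s ^ 2) := by positivity
    linarith

theorem exists_rollout_error {n m : ℕ} {f0 : (Fin n → ℝ) → Fin n → ℝ} (hf0 : ContDiff ℝ 2 f0)
    (B : Matrix (Fin n) (Fin m) ℝ) (ρ : ℝ) {c : ℝ} (hc : 0 < c) (N : ℕ) :
    ∃ C > 0, ∃ s0 > 0, ∀ (xb : ℕ → Fin n → ℝ) (ub : ℕ → Fin m → ℝ) (xt : Fin n → ℝ) (s : ℝ),
      0 ≤ s → s ≤ s0 → xb 0 = xt → (∀ k < N, xb (k + 1) = flin f0 B xt (xb k) (ub k)) →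
      (∀ k ≤ N, ‖xb k‖ ≤ ρ) → (∀ k ≤ N, ‖xb k - xt‖ ≤ c * s) →
      ∀ k ≤ N, ‖rollout f0 B xt ub k - xb k‖ ≤ C * s ^ 2 ∧
        ‖rollout f0 B xt ub k - xb k‖ ≤ 1 := by
  obtain ⟨M, hM, hf⟩ := exists_taylor_bounds hf0 (ρ + 1)
  have hM0 : 0 < M := by linarith
  set C := (M + 1) ^ N * (M * c ^ 2) with hC
  have hC0 : 0 < C := by positivity
  refine ⟨C, hC0, min 1 C⁻¹, by positivity, ?_⟩
  intro xb ub xt s hs hs0 hx0 hx hxρ hxc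
  have hCs : C * s ^ 2 ≤ 1 := by
    have h1 : s ≤ 1 := hs0.trans (min_le_left _ _)
    have h2 : C * s ≤ C * C⁻¹ := by
      gcongr
      exact hs0.trans (min_le_right _ _)
    rw [mul_inv_cancel₀ hC0.ne'] at h2
    nlinarith
  have hle : ∀ k ≤ N, (M + 1) ^ k * (M * c ^ 2) * s ^ 2 ≤ C * s ^ 2 := fun k hk => by
    rw [hC]
    gcongr
    linarith
  have key : ∀ k ≤ N, ‖rollout f0 B xt ub k - xb k‖ ≤ (M + 1) ^ k * (M * c ^ 2) * s ^ 2 := by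
    intro k
    induction k with
    | zero =>
      intro _
      rw [rollout, hx0, sub_self, norm_zero]
      positivity
    | succ k ih =>
      intro hk
      have ih' := ih (by omega)
      have h1 : ‖rollout f0 B xt ub k - xb k‖ ≤ 1 :=
        ih'.trans ((hle k (by omega)).trans hCs)
      have hxk := hxρ k (by omega)
      have m1 : rollout f0 B xt ub k ∈ Metric.closedBall (0 : Fin n → ℝ) (ρ + 1) := by
        rw [mem_closedBall_zero_iff]
        have := norm_sub_norm_le (rollout f0 B xt ub k) (xb k)
        linarith
      have m2 : xb k ∈ Metric.closedBall (0 : Fin n → ℝ) (ρ + 1) := by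
        rw [mem_closedBall_zero_iff]
        linarith
      have m3 : xt ∈ Metric.closedBall (0 : Fin n → ℝ) (ρ + 1) := by
        rw [mem_closedBall_zero_iff, ← hx0]
        linarith [hxρ 0 (by omega)]
      have e : rollout f0 B xt ub (k + 1) - xb (k + 1) =
          (f0 (rollout f0 B xt ub k) - f0 (xb k)) +
            (f0 (xb k) - f0 xt - fderiv ℝ f0 xt (xb k - xt)) := by
        rw [rollout, fdyn, hx k (by omega), flin_eq]
        abel
      rw [e]
      have h2 := ((hf _ m2).2 _ m1).2.1
      have h3 := ((hf _ m3).2 _ m2).2.2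
      have h4 : ‖xb k - xt‖ ^ 2 ≤ (c * s) ^ 2 :=
        pow_le_pow_left₀ (norm_nonneg _) (hxc k (by omega)) 2
      have h5 : 1 ≤ (M + 1) ^ k := one_le_pow₀ (by linarith)
      have h6 : M * c ^ 2 * s ^ 2 ≤ (M + 1) ^ k * (M * c ^ 2 * s ^ 2) :=
        le_mul_of_one_le_left (by positivity) h5
      calc _ ≤ _ := norm_add_le _ _
        _ ≤ M * ((M + 1) ^ k * (M * c ^ 2) * s ^ 2) + M * (c * s) ^ 2 := by
          gcongr
          · exact h2.trans (by gcongr)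
          · exact h3.trans (by gcongr)
        _ ≤ _ := by
          rw [pow_succ (M + 1) k]
          nlinarith
  exact fun k hk => ⟨(key k hk).trans (hle k hk), (key k hk).trans ((hle k hk).trans hCs)⟩

/-- An approximate trajectory of deviations from a steady state of the linearization at `q` can be
corrected to a feasible candidate, at a cost quadratic in the size of the correction. -/
theorem exists_candidate {n m p N : ℕ} (hN : n ≤ N) {f0 : (Fin n → ℝ) → Fin n → ℝ}
    (h0 : (Fin n → ℝ) → Fin p → ℝ) {B : Matrix (Fin n) (Fin m) ℝ} (D : Matrix (Fin p) (Fin m) ℝ)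
    {U Us : Set (Fin m → ℝ)} {μ : ℝ} (hμ : 0 < μ) (hA3 : A3holds f0 B μ) {a : ℝ} (ha : 0 ≤ a)
    {Q : Matrix (Fin n) (Fin n) ℝ} {R : Matrix (Fin m) (Fin m) ℝ} (hQ : Q.PosDef) (hR : R.PosDef)
    {r : ℝ} (hr : ∀ u ∈ Us, ∀ v, ‖v‖ ≤ r → u + v ∈ U) :
    ∃ K > 0, ∀ q, ‖fderiv ℝ f0 q‖ ≤ a → ∀ (x : ℕ → Fin n → ℝ) (v : ℕ → Fin m → ℝ)
      (η : ℝ) (xs : Fin n → ℝ) (us : Fin m → ℝ), x N = 0 →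
      (∀ k, ‖fderiv ℝ f0 q (x k) + B *ᵥ v k - x (k + 1)‖ ≤ η) → (xs, us) ∈ Zlin f0 B Us q →
      ‖q - xs - x 0‖ ≤ η → (∀ k, ‖v k‖ + K * η ≤ r) →
      ∃ (xb : ℕ → Fin n → ℝ) (ub : ℕ → Fin m → ℝ),
        MPCfeas f0 h0 B D U Us N q xb ub xs us (hlin h0 D q xs us) ∧
        ∀ α : ℝ, 0 < α → ∑ k ∈ Finset.range N, (qn Q (xb k - xs) + qn R (ub k - us)) ≤
          (1 + α) * ∑ k ∈ Finset.range N, (qn Q (x k) + qn R (v k)) +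
            (1 + α⁻¹) * (K * η ^ 2) := by
  obtain ⟨K, hK, hdb⟩ := exists_deadbeat hN hμ hA3 ha
  obtain ⟨HQ, hHQ, hQu⟩ := exists_qn_upper Q
  obtain ⟨HR, hHR, hRu⟩ := exists_qn_upper R
  refine ⟨max K (N * ((HQ + HR) * K ^ 2)), lt_max_of_lt_left hK, ?_⟩
  intro q hq x v η xs us hxN hxv hz hx0 hvr
  have hη : 0 ≤ η := (norm_nonneg _).trans hx0
  obtain ⟨e, c, he0, he, heN, heb, hcb⟩ := hdb q hq _ _ η hx0 hxv
  rw [mem_Zlin_iff] at hz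
  refine ⟨fun k => xs + (x k + e k), fun k => us + (v k + c k),
    ⟨fun k _ => ?_, ?_, ?_, fun k _ => ?_, mem_Zlin_iff.2 hz, rfl⟩, fun α hα => ?_⟩
  · dsimp only
    rw [flin_eq, he, add_sub_right_comm xs (x k + e k) q, map_add, map_add,
      Matrix.mulVec_add, Matrix.mulVec_add]
    conv_lhs => rw [hz.2]
    abel
  · dsimp only
    rw [he0]
    abel
  · dsimp only
    rw [hxN, heN, add_zero, add_zero]
  · refine hr us hz.1 _ ((norm_add_le _ _).trans ?_)
    refine (add_le_add_right ((hcb k).trans ?_) _).trans (hvr k)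
    gcongr
    exact le_max_left _ _
  · simp only [add_sub_cancel_left]
    have hα' : 0 < 1 + α⁻¹ := by positivity
    calc _ ≤ ∑ k ∈ Finset.range N, ((1 + α) * (qn Q (x k) + qn R (v k)) +
          (1 + α⁻¹) * ((HQ + HR) * K ^ 2 * η ^ 2)) := by
          refine Finset.sum_le_sum fun k hk => ?_
          have h1 := qn_add_le hQ hα (x k) (e k)
          have h2 := qn_add_le hR hα (v k) (c k)
          have h3 : qn Q (e k) ≤ HQ * (K * η) ^ 2 := (hQu _).trans (by
            gcongr
            exact heb k (Finset.mem_range.1 hk).le)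
          have h4 : qn R (c k) ≤ HR * (K * η) ^ 2 := (hRu _).trans (by
            gcongr
            exact hcb k)
          have h5 := mul_le_mul_of_nonneg_left (add_le_add h3 h4) hα'.le
          linarith
      _ = (1 + α) * ∑ k ∈ Finset.range N, (qn Q (x k) + qn R (v k)) +
            (1 + α⁻¹) * (N * ((HQ + HR) * K ^ 2) * η ^ 2) := by
          rw [Finset.sum_add_distrib, Finset.mul_sum, Finset.sum_const, Finset.card_range,
            nsmul_eq_mul]
          ring
      _ ≤ _ := by
          gcongr
          exact le_max_right _ _

theorem exists_interior_margin {m : ℕ} {U Us : Set (Fin m → ℝ)} (hUs : IsCompact Us)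
    (h : Us ⊆ interior U) : ∃ r > 0, ∀ u ∈ Us, ∀ v, ‖v‖ ≤ r → u + v ∈ U := by
  obtain ⟨r, hr, hrU⟩ := hUs.exists_cthickening_subset_open isOpen_interior h
  refine ⟨r, hr, fun u hu v hv => interior_subset (hrU ?_)⟩
  refine Metric.mem_cthickening_of_dist_le _ u r _ hu ?_
  rwa [dist_eq_norm, add_sub_cancel_left]

theorem Vfun_eq_of_MPCopt {n m p N : ℕ} {f0 : (Fin n → ℝ) → Fin n → ℝ}
    {h0 : (Fin n → ℝ) → Fin p → ℝ} {B : Matrix (Fin n) (Fin m) ℝ} {D : Matrix (Fin p) (Fin m) ℝ}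
    {U Us : Set (Fin m → ℝ)} {Q : Matrix (Fin n) (Fin n) ℝ} {R : Matrix (Fin m) (Fin m) ℝ}
    {S : Matrix (Fin p) (Fin p) ℝ} {yr : Fin p → ℝ} {xt : Fin n → ℝ} {xb : ℕ → Fin n → ℝ}
    {ub : ℕ → Fin m → ℝ} {xs : Fin n → ℝ} {us : Fin m → ℝ} {ys : Fin p → ℝ}
    (h : MPCopt f0 h0 B D U Us Q R S yr N xt xb ub xs us ys) :
    Vfun f0 h0 B D U Us Q R S yr N xt =
      ∑ k ∈ Finset.range N, (qn Q (xb k - xs) + qn R (ub k - us)) +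
        (qn S (ys - yr) - Jeqlin f0 h0 B D Us S yr xt) := by
  have : IsLeast {c : ℝ | ∃ xb ub xs us ys, MPCfeas f0 h0 B D U Us N xt xb ub xs us ys ∧
      c = MPCcost Q R S yr N xb ub xs us ys} (MPCcost Q R S yr N xb ub xs us ys) := by
    refine ⟨⟨xb, ub, xs, us, ys, h.1, rfl⟩, ?_⟩
    rintro c ⟨xb', ub', xs', us', ys', h', rfl⟩
    exact h.2 _ _ _ _ _ h'
  rw [Vfun, Jstar, this.csInf_eq, MPCcost, add_sub_assoc]

theorem Vfun_le_of_MPCfeas {n m p N : ℕ} {f0 : (Fin n → ℝ) → Fin n → ℝ}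
    {h0 : (Fin n → ℝ) → Fin p → ℝ} {B : Matrix (Fin n) (Fin m) ℝ} {D : Matrix (Fin p) (Fin m) ℝ}
    {U Us : Set (Fin m → ℝ)} {Q : Matrix (Fin n) (Fin n) ℝ} {R : Matrix (Fin m) (Fin m) ℝ}
    {S : Matrix (Fin p) (Fin p) ℝ} (hQ : Q.PosDef) (hR : R.PosDef) (hS : S.PosDef)
    (yr : Fin p → ℝ) {xt : Fin n → ℝ} {xb : ℕ → Fin n → ℝ}
    {ub : ℕ → Fin m → ℝ} {xs : Fin n → ℝ} {us : Fin m → ℝ} {ys : Fin p → ℝ}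
    (h : MPCfeas f0 h0 B D U Us N xt xb ub xs us ys) :
    Vfun f0 h0 B D U Us Q R S yr N xt ≤
      ∑ k ∈ Finset.range N, (qn Q (xb k - xs) + qn R (ub k - us)) +
        (qn S (ys - yr) - Jeqlin f0 h0 B D Us S yr xt) := by
  have hle : Jstar f0 h0 B D U Us Q R S yr N xt ≤ MPCcost Q R S yr N xb ub xs us ys := by
    refine csInf_le ⟨0, ?_⟩ ⟨xb, ub, xs, us, ys, h, rfl⟩
    rintro c ⟨xb', ub', xs', us', ys', -, rfl⟩
    exact add_nonneg (Finset.sum_nonneg fun k _ => add_nonneg (qn_nonneg hQ _) (qn_nonneg hR _))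
      (qn_nonneg hS _)
  rw [Vfun, ← add_sub_assoc]
  exact sub_le_sub_right hle _

/-- Close to its artificial steady state, an optimal solution spends a fixed fraction of its
tracking cost during the first `n` steps. -/
theorem exists_tracking_bound {n m p N : ℕ} (hN : n ≤ N) {f0 : (Fin n → ℝ) → Fin n → ℝ}
    (h0 : (Fin n → ℝ) → Fin p → ℝ) {B : Matrix (Fin n) (Fin m) ℝ} (D : Matrix (Fin p) (Fin m) ℝ)
    {U Us : Set (Fin m → ℝ)} {μ : ℝ} (hμ : 0 < μ) (hA3 : A3holds f0 B μ) {a : ℝ} (ha : 0 ≤ a)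
    {Q : Matrix (Fin n) (Fin n) ℝ} {R : Matrix (Fin m) (Fin m) ℝ} (hQ : Q.PosDef) (hR : R.PosDef)
    (S : Matrix (Fin p) (Fin p) ℝ) (yr : Fin p → ℝ)
    {r : ℝ} (hr0 : 0 < r) (hr : ∀ u ∈ Us, ∀ v, ‖v‖ ≤ r → u + v ∈ U) :
    ∃ c ≥ 1, ∃ δ > 0, ∀ xt xb ub xs us ys, ‖fderiv ℝ f0 xt‖ ≤ a →
      MPCopt f0 h0 B D U Us Q R S yr N xt xb ub xs us ys → ‖xt - xs‖ ≤ δ →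
      ∑ k ∈ Finset.range N, (qn Q (xb k - xs) + qn R (ub k - us)) ≤
        c * ∑ k ∈ Finset.range n, (qn Q (xb k - xs) + qn R (ub k - us)) := by
  obtain ⟨K, hK, hcand⟩ := exists_candidate hN h0 D hμ hA3 ha hQ hR hr
  obtain ⟨l, hl, hQl⟩ := exists_qn_lower hQ
  refine ⟨2 * K / l + 1, by linarith [show 0 < 2 * K / l by positivity], r / K, by positivity, ?_⟩
  intro xt xb ub xs us ys hxt hopt hδ
  have hz := hopt.1.2.2.2.2.1
  obtain ⟨xb', ub', hfeas, hcost⟩ := hcand xt hxt (fun _ => 0) (fun _ => 0) ‖xt - xs‖ xs us rfl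
    (fun _ => by simp) hz (by simp) (fun _ => by
      rw [norm_zero, zero_add, mul_comm]
      exact (le_div_iff₀ hK).1 hδ)
  have h1 := hopt.2 _ _ _ _ _ hfeas
  rw [MPCcost, MPCcost, ← hopt.1.2.2.2.2.2, add_le_add_iff_right] at h1
  have h2 := hcost 1 one_pos
  simp only [qn_zero, add_zero, Finset.sum_const_zero, mul_zero, zero_add, inv_one] at h2
  have h3 : qn Q (xt - xs) ≤ ∑ k ∈ Finset.range n, (qn Q (xb k - xs) + qn R (ub k - us)) := by
    rcases Nat.eq_zero_or_pos n with rfl | hn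
    · simp [qn]
    · rw [← hopt.1.2.1]
      refine le_trans (le_add_of_nonneg_right (qn_nonneg hR (ub 0 - us))) ?_
      exact Finset.single_le_sum (f := fun k => qn Q (xb k - xs) + qn R (ub k - us))
        (fun k _ => add_nonneg (qn_nonneg hQ _) (qn_nonneg hR _)) (Finset.mem_range.2 hn)
  have h4 : 2 * (K * ‖xt - xs‖ ^ 2) ≤ 2 * K / l * qn Q (xt - xs) := by
    rw [div_mul_eq_mul_div, le_div_iff₀ hl]
    have := mul_le_mul_of_nonneg_left (hQl (xt - xs)) (by positivity : 0 ≤ 2 * K)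
    linarith
  have h5 := qn_nonneg hQ (xt - xs)
  have h6 : 0 ≤ 2 * K / l + 1 := by positivity
  calc _ ≤ _ := h1.trans h2
    _ ≤ (2 * K / l + 1) * qn Q (xt - xs) := by linarith
    _ ≤ _ := mul_le_mul_of_nonneg_left h3 h6

/-- The tail of a feasible trajectory, extended by zero, is an approximate trajectory of deviations
for any other linearization. -/
theorem exists_shifted_deviation {n m d j : ℕ} {f0 : (Fin n → ℝ) → Fin n → ℝ}
    {B : Matrix (Fin n) (Fin m) ℝ} {Us : Set (Fin m → ℝ)} (Q : Matrix (Fin n) (Fin n) ℝ)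
    (R : Matrix (Fin m) (Fin m) ℝ) {q : Fin n → ℝ} (q' : Fin n → ℝ) {xb : ℕ → Fin n → ℝ}
    {ub : ℕ → Fin m → ℝ} {xs : Fin n → ℝ} {us : Fin m → ℝ} {δ : ℝ} (hδ : 0 ≤ δ)
    (hx : ∀ k < j + d, xb (k + 1) = flin f0 B q (xb k) (ub k)) (hxN : xb (j + d) = xs)
    (hz : (xs, us) ∈ Zlin f0 B Us q) (hxδ : ∀ k ≤ j + d, ‖xb k - xs‖ ≤ δ)
    (huδ : ∀ k < j + d, ‖ub k - us‖ ≤ δ) :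
    ∃ (x : ℕ → Fin n → ℝ) (v : ℕ → Fin m → ℝ), x 0 = xb j - xs ∧ x (j + d) = 0 ∧
      (∀ k, ‖fderiv ℝ f0 q' (x k) + B *ᵥ v k - x (k + 1)‖ ≤
        ‖fderiv ℝ f0 q' - fderiv ℝ f0 q‖ * δ) ∧ (∀ k, ‖v k‖ ≤ δ) ∧
      ∑ k ∈ Finset.range (j + d), (qn Q (x k) + qn R (v k)) =
        ∑ k ∈ Finset.range d, (qn Q (xb (j + k) - xs) + qn R (ub (j + k) - us)) := by
  have hle : ∀ k ≤ d, (if k < d then xb (j + k) - xs else 0) = xb (j + k) - xs := fun k hk => by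
    split_ifs with h
    · rfl
    · rw [le_antisymm hk (not_lt.1 h), hxN, sub_self]
  refine ⟨fun k => if k < d then xb (j + k) - xs else 0,
    fun k => if k < d then ub (j + k) - us else 0, hle 0 d.zero_le, if_neg (by omega),
    fun k => ?_, fun k => ?_, ?_⟩
  · dsimp only
    rcases lt_or_ge k d with h | h
    · rw [hle (k + 1) h, if_pos h, if_pos h, ← add_assoc, hx (j + k) (by omega)]
      rw [mem_Zlin_iff] at hz
      have e : fderiv ℝ f0 q' (xb (j + k) - xs) + B *ᵥ (ub (j + k) - us) -
          (flin f0 B q (xb (j + k)) (ub (j + k)) - xs) =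
          (fderiv ℝ f0 q' - fderiv ℝ f0 q) (xb (j + k) - xs) := by
        conv_lhs => rw [flin_eq]
        conv_lhs => arg 2; arg 2; rw [hz.2]
        simp only [_root_.sub_apply, map_sub, Matrix.mulVec_sub]
        abel
      rw [e]
      refine (ContinuousLinearMap.le_opNorm _ _).trans ?_
      gcongr
      exact hxδ _ (by omega)
    · rw [if_neg (by omega), if_neg (by omega), if_neg (by omega)]
      simp only [map_zero, Matrix.mulVec_zero, add_zero, sub_zero, norm_zero]
      positivity
  · dsimp only
    split_ifs with h
    · exact huδ _ (by omega)
    · rwa [norm_zero]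
  · rw [← Finset.sum_subset (Finset.range_mono (Nat.le_add_left d j))]
    · refine Finset.sum_congr rfl fun k hk => ?_
      dsimp only
      rw [if_pos (Finset.mem_range.1 hk), if_pos (Finset.mem_range.1 hk)]
    · intro k _ hk
      rw [Finset.mem_range] at hk
      dsimp only
      rw [if_neg hk, if_neg hk, qn_zero, qn_zero, add_zero]

theorem exists_deviation_bound {n m : ℕ} {Q : Matrix (Fin n) (Fin n) ℝ}
    {R : Matrix (Fin m) (Fin m) ℝ} (hQ : Q.PosDef) (hR : R.PosDef) :
    ∃ C > 0, ∀ (N : ℕ) (x : ℕ → Fin n → ℝ) (v : ℕ → Fin m → ℝ) (s : ℝ), 0 ≤ s → x N = 0 →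
      ∑ k ∈ Finset.range N, (qn Q (x k) + qn R (v k)) ≤ s ^ 2 →
      (∀ k ≤ N, ‖x k‖ ≤ C * s) ∧ ∀ k < N, ‖v k‖ ≤ C * s := by
  obtain ⟨cQ, hcQ, hQ'⟩ := exists_norm_le_sqrt_qn hQ
  obtain ⟨cR, hcR, hR'⟩ := exists_norm_le_sqrt_qn hR
  refine ⟨max cQ cR, lt_max_of_lt_left hcQ, fun N x v s hs hxN hsum => ?_⟩
  have key : ∀ k < N, qn Q (x k) + qn R (v k) ≤ s ^ 2 := fun k hk =>
    (Finset.single_le_sum (f := fun k => qn Q (x k) + qn R (v k))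
      (fun k _ => add_nonneg (qn_nonneg hQ _) (qn_nonneg hR _)) (Finset.mem_range.2 hk)).trans hsum
  refine ⟨fun k hk => ?_, fun k hk => ?_⟩
  · rcases hk.lt_or_eq with h | rfl
    · refine (hQ' _ s hs (by linarith [key k h, qn_nonneg hR (v k)])).trans ?_
      gcongr
      exact le_max_left _ _
    · rw [hxN, norm_zero]
      positivity
  · refine (hR' _ s hs (by linarith [key k hk, qn_nonneg hQ (x k)])).trans ?_
    gcongr
    exact le_max_right _ _

/-- One-period estimate for `Vfun`, with a free interpolation parameter `t` between the current
artificial steady state and the best steady state of the new linearization. -/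
theorem exists_Vfun_rollout_le {n m p N : ℕ} (hN : n ≤ N)
    {f0 : (Fin n → ℝ) → Fin n → ℝ} {h0 : (Fin n → ℝ) → Fin p → ℝ}
    {B : Matrix (Fin n) (Fin m) ℝ} {D : Matrix (Fin p) (Fin m) ℝ}
    {U Us : Set (Fin m → ℝ)} (yr : Fin p → ℝ)
    {Q : Matrix (Fin n) (Fin n) ℝ} {R : Matrix (Fin m) (Fin m) ℝ} {S : Matrix (Fin p) (Fin p) ℝ}
    (hUs : IsCompact Us) (hUsconv : Convex ℝ Us) (hUsint : Us ⊆ interior U)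
    (hQ : Q.PosDef) (hR : R.PosDef) (hS : S.PosDef)
    (hf0 : ContDiff ℝ 2 f0) (hh0 : ContDiff ℝ 2 h0)
    {σs : ℝ} (hσs : 0 < σs) (hA2 : A2holds f0 h0 B D σs)
    {μ : ℝ} (hμ : 0 < μ) (hA3 : A3holds f0 B μ)
    {σl : ℝ} (hσl : 0 < σl) (hA4 : A4holds f0 σl)
    {𝓑 : Set ((Fin n → ℝ) × (Fin m → ℝ))} (h𝓑 : IsCompact 𝓑)
    (hA5 : ∀ q : Fin n → ℝ, Zlin f0 B Us q ⊆ 𝓑) :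
    ∃ C > 0, ∃ κ > 0, κ ≤ 1 ∧ ∃ σ > 0, ∀ xt xb ub xs us ys θ t,
      MPCopt f0 h0 B D U Us Q R S yr N xt xb ub xs us ys →
      Vfun f0 h0 B D U Us Q R S yr N xt ≤ σ ^ 2 → 0 ≤ θ → θ ≤ 1 → 0 ≤ t → t ≤ κ →
      qn S (ys - yr) ≤ θ ^ 2 → Jeqlin f0 h0 B D Us S yr (rollout f0 B xt ub n) ≤ θ ^ 2 →
      0 ≤ Vfun f0 h0 B D U Us Q R S yr N xt ∧
      MPCfeasible f0 h0 B D U Us N (rollout f0 B xt ub n) ∧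
      Vfun f0 h0 B D U Us Q R S yr N (rollout f0 B xt ub n) ≤
        (1 - t + C * (θ + Vfun f0 h0 B D U Us Q R S yr N xt + t ^ 2)) *
          Vfun f0 h0 B D U Us Q R S yr N xt := by
  obtain ⟨r, hr0, hr⟩ := exists_interior_margin hUs hUsint
  obtain ⟨b, hb0, hb⟩ := h𝓑.isBounded.exists_pos_norm_le
  obtain ⟨C0, hC0, hdev⟩ := exists_deviation_bound hQ hR
  obtain ⟨M, hM, hfM⟩ := exists_taylor_bounds hf0 (b + C0 + 1)
  have hM0 : 0 < M := by linarith
  obtain ⟨CE, hCE, s0, hs0, hroll⟩ :=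
    exists_rollout_error hf0 B (b + C0) (c := 2 * C0) (by positivity) n
  obtain ⟨CC, hCC, hcmp⟩ := exists_steady_cost_compare hf0 hh0 hUs.isClosed hUsconv hS yr hσs hA2
    hσl hA4 h𝓑 hA5 (b + C0 + 1) (c := CE + 2 * C0) (by positivity)
  obtain ⟨K, hK, hcand⟩ := exists_candidate hN h0 D hμ hA3 hM0.le hQ hR hr
  obtain ⟨c1, hc1, δ, hδ, htr⟩ := exists_tracking_bound hN h0 D hμ hA3 hM0.le hQ hR S yr hr0 hr
  set C5 := CE + CC + M * (CE + 2 * C0) * C0 with hC5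
  have hC5' : 0 < C5 := by positivity
  have hc10 : 0 < c1 := by linarith
  set κ := (2 * c1)⁻¹ with hκ
  have hκ0 : 0 < κ := by positivity
  have hκ1 : κ ≤ 1 := inv_le_one_of_one_le₀ (by linarith)
  refine ⟨(1 + κ⁻¹) * (K * (2 * C5 ^ 2)) + CC, by positivity, κ, hκ0, hκ1,
    min (min 1 s0) (min (δ / C0) (r / (C0 + 2 * K * C5))), by positivity, ?_⟩
  intro xt xb ub xs us ys θ t hopt hV hθ hθ1 ht htκ hyθ hJθ
  have ht1 : t ≤ 1 := htκ.trans hκ1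
  have hVeq := Vfun_eq_of_MPCopt hopt
  set V := Vfun f0 h0 B D U Us Q R S yr N xt
  obtain ⟨hx, hx0, hxN, -, hz, hys⟩ := hopt.1
  set Tr := ∑ k ∈ Finset.range N, (qn Q (xb k - xs) + qn R (ub k - us))
  set J := Jeqlin f0 h0 B D Us S yr xt
  have hTr0 : 0 ≤ Tr :=
    Finset.sum_nonneg fun k _ => add_nonneg (qn_nonneg hQ _) (qn_nonneg hR _)
  have hW0 : J ≤ qn S (ys - yr) := hys ▸ Jeqlin_le hS hz
  have hV0 : 0 ≤ V := by linarith
  obtain ⟨s, hs, hsV⟩ : ∃ s, 0 ≤ s ∧ s ^ 2 = V :=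
    ⟨Real.sqrt V, Real.sqrt_nonneg _, Real.sq_sqrt hV0⟩
  rw [← hsV] at hV
  have hsσ := le_of_sq_le_sq hV (by positivity)
  obtain ⟨⟨hs1, hss0⟩, hsδ, hsr⟩ : (s ≤ 1 ∧ s ≤ s0) ∧ s ≤ δ / C0 ∧ s ≤ r / (C0 + 2 * K * C5) := by
    simpa only [le_min_iff] using hsσ
  rw [le_div_iff₀ (by positivity)] at hsδ hsr
  have hss : s ^ 2 ≤ s := by nlinarith
  obtain ⟨hxd, hud⟩ := hdev N (fun k => xb k - xs) (fun k => ub k - us) s hs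
    (by simp only [hxN, sub_self]) (by linarith)
  have hxtd : ‖xt - xs‖ ≤ C0 * s := hx0 ▸ hxd 0 N.zero_le
  have hxsb : ‖xs‖ ≤ b := (norm_fst_le (xs, us)).trans (hb _ (hA5 _ hz))
  have hC0s : C0 * s ≤ C0 := mul_le_of_le_one_right hC0.le hs1
  have hxbρ : ∀ k ≤ N, ‖xb k‖ ≤ b + C0 := fun k hk => by
    have h1 := norm_sub_norm_le (xb k) xs
    have h2 := hxd k hk
    linarith
  have hxbt : ∀ k ≤ N, ‖xb k - xt‖ ≤ 2 * C0 * s := fun k hk => by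
    have h1 := norm_sub_le (xb k - xs) (xt - xs)
    have h2 := hxd k hk
    rw [sub_sub_sub_cancel_right] at h1
    linarith
  obtain ⟨hr1, hr2⟩ := hroll xb ub xt s hs hss0 hx0 (fun k hk => hx k (hk.trans_le hN))
    (fun k hk => hxbρ k (hk.trans hN)) (fun k hk => hxbt k (hk.trans hN)) n le_rfl
  set q := rollout f0 B xt ub n
  have mt : xt ∈ Metric.closedBall (0 : Fin n → ℝ) (b + C0 + 1) := by
    rw [mem_closedBall_zero_iff, ← hx0]
    linarith [hxbρ 0 N.zero_le]
  have mq : q ∈ Metric.closedBall (0 : Fin n → ℝ) (b + C0 + 1) := by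
    rw [mem_closedBall_zero_iff]
    linarith [hxbρ n hN, norm_sub_norm_le q (xb n)]
  have hqt : ‖q - xt‖ ≤ (CE + 2 * C0) * s := by
    have h1 := norm_add_le (q - xb n) (xb n - xt)
    rw [sub_add_sub_cancel] at h1
    have h2 : CE * s ^ 2 ≤ CE * s := by gcongr
    linarith [hxbt n hN]
  have hxst : ‖xs - xt‖ ≤ (CE + 2 * C0) * s := by
    rw [norm_sub_rev]
    have h1 : 0 ≤ CE * s := by positivity
    have h2 : 0 ≤ C0 * s := by positivity
    linarith
  obtain ⟨xp, xm, um, hxp, hxm, hJm, hd1, hd2, hyp⟩ := hcmp xt mt q mq xs us s θ hs hs1 hθ hθ1 hqt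
    hz hxst (by rw [← hys]; linarith) (by rw [← hys]; exact hyθ) hJθ
  rw [← hys] at hyp
  have hfirst := htr xt xb ub xs us ys (hfM xt mt).1 hopt (by linarith)
  obtain ⟨d, rfl⟩ := Nat.exists_eq_add_of_le hN
  obtain ⟨x, v, hx0', hxN', hxv, hvδ, hsum⟩ := exists_shifted_deviation Q R q
    (by positivity : 0 ≤ C0 * s) hx hxN hz hxd hud
  have hzt := Zlin_convexComb hUsconv hxp hxm ht ht1
  have hη : 0 ≤ s ^ 2 + t * s := by positivity
  have hmis : ∀ k, ‖fderiv ℝ f0 q (x k) + B *ᵥ v k - x (k + 1)‖ ≤ C5 * (s ^ 2 + t * s) := by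
    refine fun k => (hxv k).trans ?_
    have h1 := ((hfM xt mt).2 q mq).1
    have h2 : M * ‖q - xt‖ ≤ M * ((CE + 2 * C0) * s) := by gcongr
    calc _ ≤ M * ((CE + 2 * C0) * s) * (C0 * s) := by
          gcongr
          exact h1.trans h2
      _ = M * (CE + 2 * C0) * C0 * s ^ 2 := by ring
      _ ≤ C5 * (s ^ 2 + t * s) := by
          gcongr
          · rw [hC5]
            linarith
          · exact le_add_of_nonneg_right (by positivity)
  have hini : ‖q - (xp + t • (xm - xp)) - x 0‖ ≤ C5 * (s ^ 2 + t * s) := by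
    have e : q - (xp + t • (xm - xp)) - x 0 = (q - xb n) - ((xp - xs) + t • (xm - xp)) := by
      rw [hx0']
      abel
    rw [e]
    have h1 := norm_sub_le (q - xb n) ((xp - xs) + t • (xm - xp))
    have h2 := norm_add_le (xp - xs) (t • (xm - xp))
    rw [norm_smul, Real.norm_of_nonneg ht] at h2
    have h3 : t * ‖xm - xp‖ ≤ t * (CC * s) := by gcongr
    have h4 : 0 ≤ CE * (t * s) := by positivity
    have h5 : 0 ≤ M * (CE + 2 * C0) * C0 * (s ^ 2 + t * s) := by positivity
    rw [hC5]
    linarith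
  have hinp : ∀ k, ‖v k‖ + K * (C5 * (s ^ 2 + t * s)) ≤ r := fun k => by
    have h1 : t * s ≤ 1 * s := by gcongr
    have h2 : K * (C5 * (s ^ 2 + t * s)) ≤ K * (C5 * (s + 1 * s)) := by gcongr
    linarith [hvδ k]
  obtain ⟨xb', ub', hfeas, hcost⟩ := hcand q (hfM q mq).1 x v _ _ _ hxN' hmis hzt hini hinp
  refine ⟨hV0, ⟨_, _, _, _, _, hfeas⟩, (Vfun_le_of_MPCfeas hQ hR hS yr hfeas).trans ?_⟩
  have h1 := hcost κ hκ0
  rw [hsum] at h1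
  have hsplit : Tr = _ := Finset.sum_range_add _ n d
  set T1 := ∑ k ∈ Finset.range n, (qn Q (xb k - xs) + qn R (ub k - us))
  set T2 := ∑ k ∈ Finset.range d, (qn Q (xb (n + k) - xs) + qn R (ub (n + k) - us))
  have h2 : 2 * κ * Tr ≤ T1 := by
    rw [hκ, mul_inv, mul_inv_cancel_left₀ two_ne_zero, inv_mul_le_iff₀ hc10]
    exact hfirst
  have h3 : (1 + κ) * T2 ≤ (1 - t) * Tr := calc
    _ ≤ (1 + κ) * ((1 - 2 * κ) * Tr) := by
      gcongr
      linarith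
    _ ≤ (1 - κ) * Tr := by
      have : 0 ≤ κ ^ 2 * Tr := by positivity
      linarith
    _ ≤ (1 - t) * Tr := by gcongr
  have h4 : K * (C5 * (s ^ 2 + t * s)) ^ 2 ≤ K * (2 * C5 ^ 2) * ((V + t ^ 2) * V) := by
    have : (s ^ 2 + t * s) ^ 2 ≤ 2 * ((V + t ^ 2) * V) := by
      rw [← hsV]
      linarith [sq_nonneg (s ^ 2 - t * s)]
    calc _ = K * C5 ^ 2 * (s ^ 2 + t * s) ^ 2 := by ring
      _ ≤ K * C5 ^ 2 * (2 * ((V + t ^ 2) * V)) := by gcongr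
      _ = _ := by ring
  have h5 := mul_le_mul_of_nonneg_left h4 (by positivity : 0 ≤ 1 + κ⁻¹)
  have h6 : qn S (hlin h0 D q (xp + t • (xm - xp)) (us + t • (um - us)) - yr) -
      Jeqlin f0 h0 B D Us S yr q ≤
      (1 - t) * (qn S (hlin h0 D q xp us - yr) - Jeqlin f0 h0 B D Us S yr q) := by
    have e := qn_convexComb S t (hlin h0 D q xp us - yr) (hlin h0 D q xm um - yr)
    rw [sub_sub_sub_cancel_right, sub_add_eq_add_sub, ← hlin_convexComb, ← hJm] at e
    have : 0 ≤ t * (1 - t) * qn S (hlin h0 D q xm um - hlin h0 D q xp us) :=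
      mul_nonneg (mul_nonneg ht (by linarith)) (qn_nonneg hS _)
    linarith
  have h7 : (1 - t) * (qn S (hlin h0 D q xp us - yr) - Jeqlin f0 h0 B D Us S yr q) ≤
      (1 - t) * (qn S (ys - yr) - J) + CC * ((θ + V) * V) := by
    rw [hsV] at hyp
    have h8 := mul_le_mul_of_nonneg_left hyp (sub_nonneg.2 ht1)
    have h9 : 0 ≤ t * (CC * ((θ + V) * V)) := by positivity
    linarith
  have h10 : 0 ≤ (1 + κ⁻¹) * (K * (2 * C5 ^ 2)) * (θ * V) := by positivity
  have h11 : 0 ≤ CC * (t ^ 2 * V) := by positivity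
  have h12 : (1 - t) * V = (1 - t) * Tr + (1 - t) * (qn S (ys - yr) - J) := by
    rw [hVeq, mul_add]
  linarith

/-- Proposition 2: contraction of the Lyapunov function candidate
`V = J*_N − J*_{eq,lin}` over `n` steps of the closed loop. There exist
`V_max, J_eq^max > 0` and `c_V ∈ (0,1)` such that whenever the tracking MPC
problem is feasible at `x_t` with `V(x_t) ≤ V_max`, `J*_{eq,lin}(x_t) ≤ J_eq^max`,
and the state `x_{t+n}` obtained by applying the first `n` optimal inputs to the
nonlinear dynamics satisfies `J*_{eq,lin}(x_{t+n}) ≤ J_eq^max`, the problem is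
feasible at `x_{t+n}` and `V(x_{t+n}) ≤ c_V V(x_t)`. -/
theorem stmt1 {n m p : ℕ} (N : ℕ) (hN : n ≤ N)
    (f0 : (Fin n → ℝ) → Fin n → ℝ) (h0 : (Fin n → ℝ) → Fin p → ℝ)
    (B : Matrix (Fin n) (Fin m) ℝ) (D : Matrix (Fin p) (Fin m) ℝ)
    (U Us : Set (Fin m → ℝ)) (yr : Fin p → ℝ)
    (Q : Matrix (Fin n) (Fin n) ℝ) (R : Matrix (Fin m) (Fin m) ℝ)
    (S : Matrix (Fin p) (Fin p) ℝ)
    (hU : IsCompact U) (hUs : IsCompact Us) (hUsconv : Convex ℝ Us)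
    (hUsint : Us ⊆ interior U)
    (hQ : Q.PosDef) (hR : R.PosDef) (hS : S.PosDef)
    -- (A1)
    (hf0 : ContDiff ℝ 2 f0) (hh0 : ContDiff ℝ 2 h0)
    -- (A2)
    (σs : ℝ) (hσs : 0 < σs) (hA2 : A2holds f0 h0 B D σs)
    -- (A3)
    (μ : ℝ) (hμ : 0 < μ) (hA3 : A3holds f0 B μ)
    -- (A4)
    (σl : ℝ) (hσl : 0 < σl) (hA4 : A4holds f0 σl)
    -- (A5)
    (𝓑 : Set ((Fin n → ℝ) × (Fin m → ℝ))) (h𝓑 : IsCompact 𝓑)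
    (hA5 : ∀ xt : Fin n → ℝ, Zlin f0 B Us xt ⊆ 𝓑) :
    ∃ Vmax Jeqmax cV : ℝ, 0 < Vmax ∧ 0 < Jeqmax ∧ 0 < cV ∧ cV < 1 ∧
      ∀ xt : Fin n → ℝ,
        MPCfeasible f0 h0 B D U Us N xt →
        Vfun f0 h0 B D U Us Q R S yr N xt ≤ Vmax →
        Jeqlin f0 h0 B D Us S yr xt ≤ Jeqmax →
        ∀ (xb : ℕ → Fin n → ℝ) (ub : ℕ → Fin m → ℝ) (xs : Fin n → ℝ)
          (us : Fin m → ℝ) (ys : Fin p → ℝ),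
          MPCopt f0 h0 B D U Us Q R S yr N xt xb ub xs us ys →
          Jeqlin f0 h0 B D Us S yr (rollout f0 B xt ub n) ≤ Jeqmax →
          MPCfeasible f0 h0 B D U Us N (rollout f0 B xt ub n) ∧
          Vfun f0 h0 B D U Us Q R S yr N (rollout f0 B xt ub n) ≤
            cV * Vfun f0 h0 B D U Us Q R S yr N xt := by
  obtain ⟨C, hC, κ, hκ, hκ1, σ, hσ, h⟩ := exists_Vfun_rollout_le hN yr hUs hUsconv hUsint hQ hR hS
    hf0 hh0 hσs hA2 hμ hA3 hσl hA4 h𝓑 hA5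
  obtain ⟨t, ht, htκ, hCt⟩ : ∃ t > 0, t ≤ κ ∧ C * t ≤ 1 / 6 :=
    ⟨min κ (1 / 6 / C), by positivity, min_le_left _ _,
      (le_div_iff₀' hC).1 (min_le_right _ _)⟩
  obtain ⟨θ, hθ, hθ1, hCθ⟩ : ∃ θ > 0, θ ≤ 1 ∧ C * θ ≤ t / 6 :=
    ⟨min 1 (t / 6 / C), by positivity, min_le_left _ _,
      (le_div_iff₀' hC).1 (min_le_right _ _)⟩
  refine ⟨min (σ ^ 2) (min (t / 6 / C) (θ ^ 2 / 2)), θ ^ 2 / 2, 1 - t / 2, by positivity,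
    by positivity, by linarith, by linarith, ?_⟩
  intro xt _ hV hJ xb ub xs us ys hopt hJ'
  simp only [le_min_iff] at hV
  obtain ⟨hVσ, hVt, hVθ⟩ := hV
  rw [le_div_iff₀' hC] at hVt
  have hTr : 0 ≤ ∑ k ∈ Finset.range N, (qn Q (xb k - xs) + qn R (ub k - us)) :=
    Finset.sum_nonneg fun k _ => add_nonneg (qn_nonneg hQ _) (qn_nonneg hR _)
  have hVeq := Vfun_eq_of_MPCopt hopt
  obtain ⟨hV0, hfeas, hle⟩ := h xt xb ub xs us ys θ t hopt hVσ hθ.le hθ1 ht.le htκ (by linarith)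
    (by linarith [sq_nonneg θ])
  refine ⟨hfeas, hle.trans (mul_le_mul_of_nonneg_right ?_ hV0)⟩
  have hCt2 : C * t ^ 2 ≤ t / 6 := by nlinarith
  linarith
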